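/- arXiv:1411.2100 — 13 statements merged into one kernel-verified Lean document; each statement's English description precedes it below -/
import Mathlib

section
/- Assume hypothesis (C). Let M ∈ ℕ, let A_1, …, A_M ∈ 𝐍 with ‖A_m Ω‖ = 1, and let c_1, …, c_M ∈ ℂ be such that ∑_{m=1}^M c_m ω_{A_m}(C) = 0 for every C ∈ 𝐍. Then ∑_{m=1}^M c_m A_m^* C A_m = 0 for every C ∈ 𝐍. -/
open scoped ComplexInnerProductSpace

/-- Lemma 2.1 of the paper. Assume hypothesis (C). If a finite linear
combination `∑ c_m ω_{A_m}` of vector states of the funnel vanishes on the union `𝐍` of the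
funnel algebras, then `∑ c_m A_m^* C A_m = 0` for every `C ∈ 𝐍`. -/
theorem stmt_0 {H : Type*} [NormedAddCommGroup H] [InnerProductSpace ℂ H] [CompleteSpace H]
    [TopologicalSpace.SeparableSpace H]
    (N : ℕ → VonNeumannAlgebra H)
    (hmono : ∀ n, (N n : Set (H →L[ℂ] H)) ⊆ (N (n + 1) : Set (H →L[ℂ] H)))
    (Ω : H) (hΩ : ‖Ω‖ = 1)
    -- Hypothesis (C): for every `n` the span of
    -- `{X Ω : X ∈ N (n+1), X commutes with N n}` is dense in `H`.
    (hC : ∀ n : ℕ, Dense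
      (Submodule.span ℂ
        {x : H | ∃ X ∈ N (n + 1), (∀ Y ∈ N n, X * Y = Y * X) ∧ x = X Ω} : Set H))
    (M : ℕ) (A : Fin M → (H →L[ℂ] H))
    (hA : ∀ m, A m ∈ ⋃ n, (N n : Set (H →L[ℂ] H)))
    (hAnorm : ∀ m, ‖A m Ω‖ = 1)
    (c : Fin M → ℂ)
    (hvanish : ∀ C ∈ ⋃ n, (N n : Set (H →L[ℂ] H)),
      ∑ m, c m * ⟪A m Ω, C (A m Ω)⟫ = 0) :
    ∀ C ∈ ⋃ n, (N n : Set (H →L[ℂ] H)),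
      ∑ m, c m • (star (A m) * C * A m) = 0 := by
  intro C hCm
  have hmono' : Monotone (fun n => (N n : Set (H →L[ℂ] H))) := monotone_nat_of_le_succ hmono
  simp only [Set.mem_iUnion] at hA hCm
  choose k hk using hA
  obtain ⟨l, hl⟩ := hCm
  obtain ⟨n, hAn, hCn⟩ : ∃ n, (∀ m, A m ∈ N n) ∧ C ∈ N n := by
    refine ⟨max l (Finset.univ.sup k), fun m => ?_, ?_⟩
    · exact hmono' ((Finset.le_sup (Finset.mem_univ m)).trans (le_max_right _ _)) (hk m)
    · exact hmono' (le_max_left _ _) hl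
  refine ContinuousLinearMap.ext_on (hC n) ?_
  rintro _ ⟨Y, hY, hYc, rfl⟩
  rw [ContinuousLinearMap.zero_apply]
  set T := ∑ m, c m • (star (A m) * C * A m) with hT
  have key : ∀ X ∈ N (n + 1), (∀ Z ∈ N n, X * Z = Z * X) → ⟪T (Y Ω), X Ω⟫ = 0 := by
    intro X hX hXc
    rw [← inner_conj_symm, map_eq_zero]
    have h := hvanish (star X * C * Y) (Set.mem_iUnion.2 ⟨n + 1,
      mul_mem (mul_mem (star_mem hX) (hmono n hCn)) hY⟩)
    rw [← h, hT, ContinuousLinearMap.sum_apply, inner_sum]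
    refine Finset.sum_congr rfl fun m _ => ?_
    have e1 : A m (X Ω) = X (A m Ω) :=
      (congrArg (fun f : H →L[ℂ] H => f Ω) (hXc _ (hAn m))).symm
    have e2 : A m (Y Ω) = Y (A m Ω) :=
      (congrArg (fun f : H →L[ℂ] H => f Ω) (hYc _ (hAn m))).symm
    simp only [ContinuousLinearMap.smul_apply, ContinuousLinearMap.mul_def, ContinuousLinearMap.comp_apply, inner_smul_right,
      ContinuousLinearMap.star_eq_adjoint, ContinuousLinearMap.adjoint_inner_right, e1, e2]
  have hz : innerSL ℂ (T (Y Ω)) = 0 := by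
    refine ContinuousLinearMap.ext_on (hC n) ?_
    rintro _ ⟨X, hX, hXc, rfl⟩
    simpa using key X hX hXc
  have := congrArg (fun f => f (T (Y Ω))) hz
  simpa using this
end

section
/- Assume hypotheses (C), (S), (E). Let A, B ∈ 𝐍 with ‖A Ω‖ = ‖B Ω‖ = 1 and suppose ω_A(C) = ω_B(C) for all C ∈ 𝐍. Then B = ⟨A Ω, B Ω⟩ • A and |⟨A Ω, B Ω⟩| = 1. Conversely, if B = t • A for some t ∈ ℂ with |t| = 1, then ω_A = ω_B. Hence ω_A ↦ {t • A : t ∈ ℂ, |t| = 1} is a well-defined bijective lift from the states {ω_A : A ∈ 𝐍, ‖AΩ‖ = 1} to normalized rays in 𝐍. -/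
open scoped ComplexInnerProductSpace

/-- Proposition 2.2 of the paper. Under hypotheses (C), (S), (E):
if `ω_A = ω_B` on `𝐍` then `B = ⟨AΩ, BΩ⟩ • A` with `|⟨AΩ, BΩ⟩| = 1`; conversely a
unimodular multiple `B = t • A` induces the same state.  Hence `ω_A ↦ 𝕋 A` is a
well-defined bijective lift from the states to normalized rays in `𝐍`. -/
theorem stmt_1 {H : Type*} [NormedAddCommGroup H] [InnerProductSpace ℂ H] [CompleteSpace H]
    [TopologicalSpace.SeparableSpace H]
    (N : ℕ → VonNeumannAlgebra H)
    (hmono : ∀ n, (N n : Set (H →L[ℂ] H)) ⊆ (N (n + 1) : Set (H →L[ℂ] H)))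
    (Ω : H) (hΩ : ‖Ω‖ = 1)
    -- Hypothesis (C)
    (hC : ∀ n : ℕ, Dense
      (Submodule.span ℂ
        {x : H | ∃ X ∈ N (n + 1), (∀ Y ∈ N n, X * Y = Y * X) ∧ x = X Ω} : Set H))
    -- Hypothesis (S): `Ω` is separating for each `N n`.
    (hS : ∀ n : ℕ, ∀ A ∈ N n, A Ω = 0 → A = 0)
    -- Hypothesis (E): minimal projections implementing `ω ↾ N n` inside `N (n+1)`.
    (hE : ∀ n : ℕ, ∃ E : H →L[ℂ] H, E ∈ N (n + 1) ∧ E ≠ 0 ∧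
      IsSelfAdjoint E ∧ IsIdempotentElem E ∧
      ∀ C ∈ N n, E * C * E = ⟪Ω, C Ω⟫ • E)
    (A B : H →L[ℂ] H)
    (hA : A ∈ ⋃ n, (N n : Set (H →L[ℂ] H)))
    (hB : B ∈ ⋃ n, (N n : Set (H →L[ℂ] H)))
    (hAnorm : ‖A Ω‖ = 1) (hBnorm : ‖B Ω‖ = 1) :
    ((∀ C ∈ ⋃ n, (N n : Set (H →L[ℂ] H)),
        ⟪A Ω, C (A Ω)⟫ = ⟪B Ω, C (B Ω)⟫) →
      B = ⟪A Ω, B Ω⟫ • A ∧ ‖⟪A Ω, B Ω⟫‖ = 1) ∧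
    (∀ t : ℂ, ‖t‖ = 1 → B = t • A →
      ∀ C ∈ ⋃ n, (N n : Set (H →L[ℂ] H)),
        ⟪A Ω, C (A Ω)⟫ = ⟪B Ω, C (B Ω)⟫) := by
  have hle : ∀ m n : ℕ, m ≤ n → ∀ X, X ∈ N m → X ∈ N n := by
    intro m n h
    induction h with
    | refl => exact fun X h => h
    | step _ ih => exact fun X h => hmono _ (ih X h)
  constructor
  · intro hst
    obtain ⟨a, ha⟩ := Set.mem_iUnion.1 hA
    obtain ⟨b, hb⟩ := Set.mem_iUnion.1 hB
    have hA' : A ∈ N (max a b) := hle a _ (le_max_left _ _) A ha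
    have hB' : B ∈ N (max a b) := hle b _ (le_max_right _ _) B hb
    generalize max a b = n at hA' hB'
    obtain ⟨E, hEN, hE0, hEsa, hEid, hEC⟩ := hE n
    have hspan : ∀ x ∈ Submodule.span ℂ
        {x : H | ∃ X ∈ N (n + 1), (∀ Y ∈ N n, X * Y = Y * X) ∧ x = X Ω},
        ∃ X ∈ N (n + 1), (∀ Y ∈ N n, X * Y = Y * X) ∧ x = X Ω := by
      intro x hx
      induction hx using Submodule.span_induction with
      | mem x h => exact h
      | zero => exact ⟨0, zero_mem (N (n+1)).toStarSubalgebra, by simp, by simp⟩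
      | add x y _ _ hx hy =>
        obtain ⟨X, h1, h2, h3⟩ := hx
        obtain ⟨Y, k1, k2, k3⟩ := hy
        exact ⟨X + Y, add_mem (S := StarSubalgebra ℂ (H →L[ℂ] H)) (s := (N (n+1)).toStarSubalgebra) h1 k1,
          fun Z hZ => by rw [add_mul, mul_add, h2 Z hZ, k2 Z hZ], by simp [h3, k3]⟩
      | smul c x _ hx =>
        obtain ⟨X, h1, h2, h3⟩ := hx
        exact ⟨c • X, (N (n+1)).toStarSubalgebra.smul_mem h1 c,
          fun Z hZ => by rw [smul_mul_assoc, mul_smul_comm, h2 Z hZ], by simp [h3]⟩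
    have hA1 := hle n (n+1) (Nat.le_succ n) A hA'
    have hq : ∀ C ∈ N (n + 1), ∀ ξ : H, ⟪A ξ, C (A ξ)⟫ = ⟪B ξ, C (B ξ)⟫ := by
      intro C hCN ξ
      have hcl : IsClosed {ξ : H | ⟪A ξ, C (A ξ)⟫ = ⟪B ξ, C (B ξ)⟫} :=
        isClosed_eq (by fun_prop) (by fun_prop)
      have hsub : (Submodule.span ℂ
        {x : H | ∃ X ∈ N (n + 1), (∀ Y ∈ N n, X * Y = Y * X) ∧ x = X Ω} : Set H) ⊆
          {ξ : H | ⟪A ξ, C (A ξ)⟫ = ⟪B ξ, C (B ξ)⟫} := by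
        intro x hx
        obtain ⟨X, h1, h2, rfl⟩ := hspan x hx
        have hm : star X * C * X ∈ N (n+1) := mul_mem (mul_mem (star_mem h1) hCN) h1
        have := hst _ (Set.mem_iUnion.2 ⟨n+1, hm⟩)
        have eA : X (A Ω) = A (X Ω) := DFunLike.congr_fun (h2 A hA') Ω
        have eB : X (B Ω) = B (X Ω) := DFunLike.congr_fun (h2 B hB') Ω
        simpa [ContinuousLinearMap.star_eq_adjoint,
          ContinuousLinearMap.adjoint_inner_right, eA, eB] using this
      exact hcl.closure_subset_iff.2 hsub (hC n ξ)
    obtain ⟨η, hη⟩ : ∃ η, E η ≠ 0 := by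
      by_contra! h
      exact hE0 (ContinuousLinearMap.ext h)
    have hEξ : E (E η) = E η := DFunLike.congr_fun hEid η
    generalize E η = ξ at hη hEξ
    have key : ∀ T : H →L[ℂ] H, T ∈ N n →
        ⟪T ξ, (A * E * star A) (T ξ)⟫ = ((‖⟪A Ω, T Ω⟫‖ * ‖ξ‖ : ℝ) : ℂ) ^ 2 := by
      intro T hT
      have h1 : E (star A (T ξ)) = ⟪A Ω, T Ω⟫ • ξ := by
        have := DFunLike.congr_fun (hEC (star A * T) (mul_mem (star_mem hA') hT)) ξ
        simpa [ContinuousLinearMap.star_eq_adjoint,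
          ContinuousLinearMap.adjoint_inner_right, hEξ] using this
      have h2 : ⟪T ξ, (A * E * star A) (T ξ)⟫ = ⟪E (star A (T ξ)), E (star A (T ξ))⟫ := by
        have e1 : E (E (star A (T ξ))) = E (star A (T ξ)) := DFunLike.congr_fun hEid _
        have e2 : ∀ x y, ⟪E x, y⟫ = ⟪x, E y⟫ := fun x y => by
          have := ContinuousLinearMap.adjoint_inner_left E y x
          rwa [← ContinuousLinearMap.star_eq_adjoint, hEsa.star_eq] at this
        rw [e2, e1, ContinuousLinearMap.star_eq_adjoint,
          ContinuousLinearMap.adjoint_inner_left]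
        rfl
      rw [h2, h1, inner_self_eq_norm_sq_to_K, norm_smul]
      rfl
    have hc := hq (A * E * star A) (mul_mem (mul_mem hA1 hEN) (star_mem hA1)) ξ
    rw [key A hA', key B hB'] at hc
    have hAA : ‖⟪A Ω, A Ω⟫‖ = 1 := by
      rw [inner_self_eq_norm_sq_to_K, hAnorm]; simp
    rw [hAA] at hc
    have hc' : (1 * ‖ξ‖) ^ 2 = (‖⟪A Ω, B Ω⟫‖ * ‖ξ‖) ^ 2 := by exact_mod_cast hc
    have hpos : 0 < ‖ξ‖ := norm_pos_iff.2 hη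
    have h1 : ‖⟪A Ω, B Ω⟫‖ = 1 := by
      have := (sq_eq_sq₀ (by positivity) (by positivity)).1 hc'
      exact (mul_right_cancel₀ hpos.ne' this).symm
    refine ⟨?_, h1⟩
    have hz : B Ω - ⟪A Ω, B Ω⟫ • A Ω = 0 := by
      rw [← inner_self_eq_zero (𝕜 := ℂ)]
      simp only [inner_sub_left, inner_sub_right, inner_smul_left, inner_smul_right]
      rw [inner_self_eq_norm_sq_to_K, inner_self_eq_norm_sq_to_K, hAnorm, hBnorm,
        ← inner_conj_symm (B Ω) (A Ω)]
      have : ⟪A Ω, B Ω⟫ * (starRingEnd ℂ) ⟪A Ω, B Ω⟫ = 1 := by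
        rw [RCLike.mul_conj, h1]; simp
      simp only [RCLike.ofReal_one]
      linear_combination (-1 : ℂ) * this
    have hmem : B - ⟪A Ω, B Ω⟫ • A ∈ N n :=
      sub_mem (S := StarSubalgebra ℂ (H →L[ℂ] H)) (H := (N n).toStarSubalgebra) hB'
        ((N n).toStarSubalgebra.smul_mem hA' _)
    exact sub_eq_zero.1 (hS n _ hmem (by simpa using hz))
  · rintro t ht rfl C -
    have : (starRingEnd ℂ) t * t = 1 := by rw [RCLike.conj_mul, ht]; simp
    simp only [ContinuousLinearMap.smul_apply, map_smul, inner_smul_left, inner_smul_right]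
    linear_combination (-⟪A Ω, C (A Ω)⟫) * this
end

section
/- Assume hypotheses (C), (S), (E). Fix n ∈ ℕ and let A_m ∈ N n, m ∈ ℕ, be a sequence with sup_m ‖A_m‖ < ∞ and ‖A_m Ω‖ = 1 such that (ω_{A_m})_{m∈ℕ} is a Cauchy sequence with respect to the norm ‖φ‖ = sup{|φ(C)| : C ∈ 𝐍, ‖C‖ ≤ 1}. Then there exist complex numbers t_m with |t_m| = 1 and an operator A ∈ N n with ‖A Ω‖ = 1 such that t_m • A_m converges to A in the strong operator topology and ‖ω_{A_m} − ω_A‖ → 0. -/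
open scoped ComplexInnerProductSpace

open Filter Topology

lemma aux_phase {H : Type*} [NormedAddCommGroup H] [InnerProductSpace ℂ H] (z : ℂ) :
    ∃ c : ℂ, ‖c‖ = 1 ∧ c * z = (‖z‖ : ℂ) := by
  by_cases hz : z = 0
  · exact ⟨1, by simp, by simp [hz]⟩
  · have hz' : (‖z‖ : ℂ) ≠ 0 := by simpa using hz
    refine ⟨(‖z‖ : ℂ) / z, ?_, ?_⟩
    · rw [norm_div, Complex.norm_real, norm_norm, div_self (by simpa using hz)]
    · field_simp

lemma aux_dist {H : Type*} [NormedAddCommGroup H] [InnerProductSpace ℂ H] (a b : H)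
    (ha : ‖a‖ = 1) (hb : ‖b‖ = 1) :
    ∃ c : ℂ, ‖c‖ = 1 ∧ ‖a - c • b‖ ^ 2 = 2 - 2 * ‖(⟪a, b⟫ : ℂ)‖ := by
  obtain ⟨c, hc, hc'⟩ := aux_phase (H := H) (⟪a, b⟫ : ℂ)
  refine ⟨c, hc, ?_⟩
  rw [@norm_sub_sq ℂ, inner_smul_right, hc', norm_smul, hc, ha, hb]
  simp
  ring

lemma aux_cauchy {H : Type*} [NormedAddCommGroup H] [InnerProductSpace ℂ H] (a : ℕ → H)
    (ha : ∀ m, ‖a m‖ = 1)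
    (h : ∀ ε : ℝ, 0 < ε → ∃ M, ∀ l ≥ M, ∀ m ≥ M, 1 - ε ≤ ‖(⟪a m, a l⟫ : ℂ)‖) :
    ∃ t : ℕ → ℂ, (∀ m, ‖t m‖ = 1) ∧ CauchySeq (fun m => t m • a m) := by
  obtain ⟨m0, hm0⟩ := h (1/2) (by norm_num)
  choose t ht ht' using fun m => aux_phase (H := H) (⟪a m0, a m⟫ : ℂ)
  refine ⟨t, ht, ?_⟩
  have hbn : ∀ m, ‖t m • a m‖ = 1 := fun m => by rw [norm_smul, ht, ha, one_mul]
  rw [Metric.cauchySeq_iff]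
  intro ε hε
  obtain ⟨M, hM⟩ := h ((ε / 6) ^ 2 / 2) (by positivity)
  refine ⟨max M m0, fun l hl m hm => ?_⟩
  have hl1 := le_of_max_le_left hl
  have hl2 := le_of_max_le_right hl
  have hm1 := le_of_max_le_left hm
  have hm2 := le_of_max_le_right hm
  obtain ⟨c, hc, hcd⟩ := aux_dist (t l • a l) (t m • a m) (hbn l) (hbn m)
  have h1 : ‖(⟪t l • a l, t m • a m⟫ : ℂ)‖ = ‖(⟪a l, a m⟫ : ℂ)‖ := by
    rw [inner_smul_left, inner_smul_right]; simp [ht]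
  rw [h1] at hcd
  have h2 := hM m hm1 l hl1
  have hη : ‖t l • a l - c • t m • a m‖ ≤ ε / 6 := by
    refine (sq_le_sq₀ (norm_nonneg _) (by positivity)).1 ?_
    rw [hcd]; linarith
  have h3 : ‖(⟪a m0, t l • a l - c • t m • a m⟫ : ℂ)‖ ≤ ε / 6 := by
    refine (norm_inner_le_norm _ _).trans ?_
    rw [ha, one_mul]; exact hη
  rw [inner_sub_right, inner_smul_right, inner_smul_right, inner_smul_right, ht', ht'] at h3
  set rl := ‖(⟪a m0, a l⟫ : ℂ)‖ with hrl
  set rm := ‖(⟪a m0, a m⟫ : ℂ)‖ with hrm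
  have hrm2 : 1 / 2 ≤ rm := by have := hm0 m hm2 m0 le_rfl; linarith
  have h4 : |rl - rm| ≤ ε / 6 := by
    refine le_trans ?_ h3
    have := abs_norm_sub_norm_le (rl : ℂ) (c * rm)
    rw [norm_mul, hc, one_mul, Complex.norm_real, Complex.norm_real, hrl, hrm, norm_norm,
      norm_norm] at this
    exact this
  have h5 : ‖(c - 1) * (rm : ℂ)‖ ≤ ε / 6 + ε / 6 := by
    have : (c - 1) * (rm : ℂ) = ((rl - rm : ℝ) : ℂ) - ((rl : ℂ) - c * rm) := by push_cast; ring
    rw [this]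
    refine (norm_sub_le _ _).trans (add_le_add ?_ h3)
    rw [Complex.norm_real]; exact h4
  have h6 : ‖c - 1‖ ≤ 4 * (ε / 6) := by
    rw [norm_mul, Complex.norm_real, Real.norm_of_nonneg (by linarith)] at h5
    nlinarith [norm_nonneg (c - 1)]
  have h7 : t l • a l - t m • a m = (t l • a l - c • t m • a m) + (c - 1) • (t m • a m) := by
    rw [sub_smul, one_smul]; abel
  rw [dist_eq_norm, h7]
  refine (norm_add_le _ _).trans_lt ?_
  rw [norm_smul, hbn]
  linarith

lemma aux_span {H : Type*} [NormedAddCommGroup H] [InnerProductSpace ℂ H] [CompleteSpace H]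
    (N N' : VonNeumannAlgebra H) (Ω x : H)
    (hx : x ∈ Submodule.span ℂ
        {x : H | ∃ X ∈ N', (∀ Y ∈ N, X * Y = Y * X) ∧ x = X Ω}) :
    ∃ X ∈ N', (∀ Y ∈ N, X * Y = Y * X) ∧ x = X Ω := by
  induction hx using Submodule.span_induction with
  | mem x h => exact h
  | zero => exact ⟨0, zero_mem N', by simp, by simp⟩
  | add x y _ _ h1 h2 =>
    obtain ⟨X, hX, hX', rfl⟩ := h1
    obtain ⟨Y, hY, hY', rfl⟩ := h2
    exact ⟨X + Y, add_mem hX hY, fun Z hZ => by rw [add_mul, mul_add, hX' Z hZ, hY' Z hZ], by simp⟩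
  | smul c x _ h1 =>
    obtain ⟨X, hX, hX', rfl⟩ := h1
    refine ⟨c • X, ?_, fun Z hZ => by rw [smul_mul_assoc, mul_smul_comm, hX' Z hZ], by simp⟩
    exact N'.toStarSubalgebra.smul_mem hX c

lemma aux_overlap {H : Type*} [NormedAddCommGroup H] [InnerProductSpace ℂ H] [CompleteSpace H]
    (N : ℕ → VonNeumannAlgebra H)
    (hmono : ∀ n, (N n : Set (H →L[ℂ] H)) ⊆ (N (n + 1) : Set (H →L[ℂ] H)))
    (Ω : H)
    (hC : ∀ n : ℕ, Dense
      (Submodule.span ℂ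
        {x : H | ∃ X ∈ N (n + 1), (∀ Y ∈ N n, X * Y = Y * X) ∧ x = X Ω} : Set H))
    (hE : ∀ n : ℕ, ∃ E : H →L[ℂ] H, E ∈ N (n + 1) ∧ E ≠ 0 ∧
      IsSelfAdjoint E ∧ IsIdempotentElem E ∧
      ∀ C ∈ N n, E * C * E = ⟪Ω, C Ω⟫ • E)
    (n : ℕ) (A : ℕ → (H →L[ℂ] H))
    (hA : ∀ m, A m ∈ N n)
    (K : ℝ) (hK : ∀ m, ‖A m‖ ≤ K)
    (hAnorm : ∀ m, ‖A m Ω‖ = 1)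
    (hcauchy : ∀ ε : ℝ, 0 < ε → ∃ M : ℕ, ∀ l ≥ M, ∀ m ≥ M,
      ∀ C ∈ ⋃ k, (N k : Set (H →L[ℂ] H)), ‖C‖ ≤ 1 →
        ‖⟪A l Ω, C (A l Ω)⟫ - ⟪A m Ω, C (A m Ω)⟫‖ ≤ ε) :
    ∀ ε : ℝ, 0 < ε → ∃ M, ∀ l ≥ M, ∀ m ≥ M, 1 - ε ≤ ‖(⟪A m Ω, A l Ω⟫ : ℂ)‖ := by
  intro ε hε
  obtain ⟨E, hEN, hE0, hEsa, hEid, hEC⟩ := hE n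
  have hadj : ∀ x y : H, ⟪E x, y⟫ = ⟪x, E y⟫ := by
    intro x y
    rw [← ContinuousLinearMap.adjoint_inner_right, ← ContinuousLinearMap.star_eq_adjoint,
      hEsa.star_eq]
  have hEE : ∀ x, E (E x) = E x := fun x => by
    conv_rhs => rw [← hEid.eq]
    rfl
  have hEn : ∀ x, ‖E x‖ ≤ ‖x‖ := by
    intro x
    have h1 : ‖E x‖ ^ 2 ≤ ‖x‖ * ‖E x‖ := by
      have h2 : (⟪E x, E x⟫ : ℂ) = ⟪x, E x⟫ := by rw [hadj, hEE]
      have h3 := norm_inner_le_norm (𝕜 := ℂ) x (E x)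
      rw [← h2, inner_self_eq_norm_sq_to_K] at h3
      simpa using h3
    by_contra hcon
    push Not at hcon
    nlinarith [norm_nonneg x]
  have hEn1 : ‖E‖ ≤ 1 := E.opNorm_le_bound zero_le_one (fun x => by simpa using hEn x)
  obtain ⟨ξ, hξ1, hξE⟩ : ∃ ξ : H, ‖ξ‖ = 1 ∧ E ξ = ξ := by
    obtain ⟨v, hv⟩ : ∃ v, E v ≠ 0 := by
      by_contra hcon
      push Not at hcon
      exact hE0 (ContinuousLinearMap.ext hcon)
    refine ⟨((‖E v‖⁻¹ : ℝ) : ℂ) • E v, ?_, ?_⟩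
    · rw [norm_smul, Complex.norm_real, norm_inv, norm_norm, inv_mul_cancel₀ (by simpa using hv)]
    · rw [map_smul, hEE]
  have hK0 : 0 ≤ K := (norm_nonneg _).trans (hK 0)
  -- accuracy
  set δ : ℝ := min (ε / 4) 1 / (K ^ 2 + 1) with hδ
  have hδ0 : 0 < δ := by positivity
  have hKδ : K ^ 2 * δ ≤ min (ε / 4) 1 := by
    rw [hδ, ← mul_div_assoc, div_le_iff₀ (by positivity)]
    have : 0 < min (ε / 4) 1 := by positivity
    nlinarith
  obtain ⟨y, hy, hyd⟩ := Metric.dense_iff.1 (hC n) ξ δ hδ0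
  obtain ⟨X, hXN, hXc, rfl⟩ := aux_span _ _ _ _ hyd
  have hXξ : ‖X Ω - ξ‖ ≤ δ := by
    have := Metric.mem_ball.1 hy
    rw [dist_eq_norm] at this; exact this.le
  set T : ℝ := ‖X‖ ^ 2 * K ^ 2 + 1 with hT
  have hT0 : 0 < T := by positivity
  obtain ⟨M, hM⟩ := hcauchy (ε / 4 / T) (by positivity)
  refine ⟨M, fun l hl m hm => ?_⟩
  -- the test operator
  set W : H →L[ℂ] H := E * star (A m) * X with hW
  have hup : ∀ A ∈ N n, A ∈ N (n + 1) := fun A h => hmono n h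
  have hWN : W ∈ N (n + 1) := mul_mem (mul_mem hEN (star_mem (hup _ (hA m)))) hXN
  have hDN : star W * W ∈ N (n + 1) := mul_mem (star_mem hWN) hWN
  have hWn : ‖W‖ ≤ K * ‖X‖ := by
    have h1 : ‖star (A m)‖ ≤ K := by rw [norm_star]; exact hK m
    calc ‖W‖ ≤ ‖E * star (A m)‖ * ‖X‖ := norm_mul_le _ _
      _ ≤ (‖E‖ * ‖star (A m)‖) * ‖X‖ := by gcongr; exact norm_mul_le _ _
      _ ≤ (1 * K) * ‖X‖ := by gcongr
      _ = _ := by ring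
  have hDn : ‖star W * W‖ ≤ T := by
    rw [CStarRing.norm_star_mul_self]
    nlinarith [norm_nonneg W, mul_self_le_mul_self (norm_nonneg W) hWn]
  have hWi : ∀ v : H, (⟪v, (star W * W) v⟫ : ℂ) = ((‖W v‖ ^ 2 : ℝ) : ℂ) := by
    intro v
    rw [ContinuousLinearMap.mul_apply, ContinuousLinearMap.star_eq_adjoint,
      ContinuousLinearMap.adjoint_inner_right, inner_self_eq_norm_sq_to_K]
    simp
  have hdiff : |‖W (A l Ω)‖ ^ 2 - ‖W (A m Ω)‖ ^ 2| ≤ ε / 4 := by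
    have h1 := hM l hl m hm (((T⁻¹ : ℝ) : ℂ) • (star W * W))
      (Set.mem_iUnion.2 ⟨n + 1, (N (n+1)).toStarSubalgebra.smul_mem hDN _⟩) (by
        rw [norm_smul, Complex.norm_real, Real.norm_of_nonneg (by positivity), inv_mul_le_iff₀ hT0]
        simpa using hDn)
    rw [ContinuousLinearMap.smul_apply, ContinuousLinearMap.smul_apply, inner_smul_right,
      inner_smul_right, hWi, hWi, ← mul_sub, norm_mul, Complex.norm_real,
      Real.norm_of_nonneg (by positivity), ← Complex.ofReal_sub, Complex.norm_real,
      inv_mul_le_iff₀ hT0, mul_div_cancel₀ _ hT0.ne'] at h1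
    exact h1
  have hWk : ∀ k, |‖W (A k Ω)‖ - ‖(⟪A m Ω, A k Ω⟫ : ℂ)‖| ≤ min (ε / 4) 1 := by
    intro k
    have e1 : W (A k Ω) = E (star (A m) (A k (X Ω))) := by
      have := congrArg (fun T : H →L[ℂ] H => T Ω) (hXc _ (hA k))
      simp only [ContinuousLinearMap.mul_apply] at this
      rw [← this]; rfl
    have e2 : E (star (A m) (A k ξ)) = (⟪A m Ω, A k Ω⟫ : ℂ) • ξ := by
      have := congrArg (fun T : H →L[ℂ] H => T ξ)
        (hEC (star (A m) * A k) (mul_mem (star_mem (hA m)) (hA k)))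
      simp only [ContinuousLinearMap.mul_apply, ContinuousLinearMap.smul_apply, hξE] at this
      rw [this, ContinuousLinearMap.star_eq_adjoint, ContinuousLinearMap.adjoint_inner_right]
    have e3 : ‖(⟪A m Ω, A k Ω⟫ : ℂ)‖ = ‖E (star (A m) (A k ξ))‖ := by
      rw [e2, norm_smul, hξ1, mul_one]
    rw [e3, e1]
    refine (abs_norm_sub_norm_le _ _).trans ?_
    rw [← map_sub, ← map_sub, ← map_sub]
    refine (hEn _).trans (le_trans ?_ hKδ)
    have h1 : ‖star (A m)‖ ≤ K := by rw [norm_star]; exact hK m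
    calc _ ≤ K * ‖A k (X Ω - ξ)‖ := (star (A m)).le_of_opNorm_le h1 _
      _ ≤ K * (K * ‖X Ω - ξ‖) := by gcongr; exact (A k).le_of_opNorm_le (hK k) _
      _ ≤ K * (K * δ) := by gcongr
      _ = _ := by ring
  have h1 := abs_le.1 (hWk l)
  have h2 := abs_le.1 (hWk m)
  have h3 := abs_le.1 hdiff
  have h4 : ‖(⟪A m Ω, A m Ω⟫ : ℂ)‖ = 1 := by
    rw [inner_self_eq_norm_sq_to_K, hAnorm]; simp
  rw [h4] at h2
  have h5 := min_le_left (ε/4) 1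
  have h6 := min_le_right (ε/4) 1
  set p := ‖W (A l Ω)‖
  set q := ‖W (A m Ω)‖
  have hp : 0 ≤ p := norm_nonneg _
  have hq : 0 ≤ q := norm_nonneg _
  by_contra hcon
  push Not at hcon
  -- p < 1 - 3ε/4, q ≥ 1 - ε/4
  have hp' : p < 1 - 3 * ε / 4 := by linarith [h1.2]
  have hq' : 1 - ε / 4 ≤ q := by linarith [h2.1]
  nlinarith [h3.1]

/-- Proposition 2.3 of the paper. Under hypotheses (C), (S), (E):
a uniformly bounded sequence `A_m ∈ N n` whose induced states form a Cauchy sequence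
in the norm induced by `𝐍` admits phase factors `t_m ∈ 𝕋` such that `t_m • A_m`
converges strongly to some `A ∈ N n`, and `ω_{A_m} → ω_A` in norm. -/
theorem stmt_2 {H : Type*} [NormedAddCommGroup H] [InnerProductSpace ℂ H] [CompleteSpace H]
    [TopologicalSpace.SeparableSpace H]
    (N : ℕ → VonNeumannAlgebra H)
    (hmono : ∀ n, (N n : Set (H →L[ℂ] H)) ⊆ (N (n + 1) : Set (H →L[ℂ] H)))
    (Ω : H) (hΩ : ‖Ω‖ = 1)
    -- Hypothesis (C)
    (hC : ∀ n : ℕ, Dense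
      (Submodule.span ℂ
        {x : H | ∃ X ∈ N (n + 1), (∀ Y ∈ N n, X * Y = Y * X) ∧ x = X Ω} : Set H))
    -- Hypothesis (S)
    (hS : ∀ n : ℕ, ∀ A ∈ N n, A Ω = 0 → A = 0)
    -- Hypothesis (E)
    (hE : ∀ n : ℕ, ∃ E : H →L[ℂ] H, E ∈ N (n + 1) ∧ E ≠ 0 ∧
      IsSelfAdjoint E ∧ IsIdempotentElem E ∧
      ∀ C ∈ N n, E * C * E = ⟪Ω, C Ω⟫ • E)
    (n : ℕ) (A : ℕ → (H →L[ℂ] H))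
    (hA : ∀ m, A m ∈ N n)
    (hbdd : ∃ K : ℝ, ∀ m, ‖A m‖ ≤ K)
    (hAnorm : ∀ m, ‖A m Ω‖ = 1)
    -- the states `ω_{A_m}` form a Cauchy sequence for the norm
    -- `‖φ‖ = sup {|φ(C)| : C ∈ 𝐍, ‖C‖ ≤ 1}`
    (hcauchy : ∀ ε : ℝ, 0 < ε → ∃ M : ℕ, ∀ l ≥ M, ∀ m ≥ M,
      ∀ C ∈ ⋃ k, (N k : Set (H →L[ℂ] H)), ‖C‖ ≤ 1 →
        ‖⟪A l Ω, C (A l Ω)⟫ - ⟪A m Ω, C (A m Ω)⟫‖ ≤ ε) :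
    ∃ t : ℕ → ℂ, (∀ m, ‖t m‖ = 1) ∧
    ∃ Alim : H →L[ℂ] H, Alim ∈ N n ∧ ‖Alim Ω‖ = 1 ∧
      (∀ x : H, Tendsto (fun m => (t m • A m) x) atTop (𝓝 (Alim x))) ∧
      (∀ ε : ℝ, 0 < ε → ∃ M : ℕ, ∀ m ≥ M,
        ∀ C ∈ ⋃ k, (N k : Set (H →L[ℂ] H)), ‖C‖ ≤ 1 →
          ‖⟪A m Ω, C (A m Ω)⟫ - ⟪Alim Ω, C (Alim Ω)⟫‖ ≤ ε) := by
  obtain ⟨K, hK⟩ := hbdd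
  obtain ⟨t, ht, hcs⟩ := aux_cauchy (fun m => A m Ω) hAnorm
    (aux_overlap N hmono Ω hC hE n A hA K hK hAnorm hcauchy)
  have hBn : ∀ m, ‖t m • A m‖ ≤ K := fun m => by rw [norm_smul, ht, one_mul]; exact hK m
  have hBN : ∀ m, t m • A m ∈ N n := fun m => (N n).toStarSubalgebra.smul_mem (hA m) _
  have hK0 : 0 ≤ K := (norm_nonneg _).trans (hK 0)
  have hcx : ∀ x, CauchySeq (fun m => (t m • A m) x) := by
    intro x
    rw [Metric.cauchySeq_iff]
    intro ε hε
    obtain ⟨y, hy, hyd⟩ := Metric.dense_iff.1 (hC n) x (ε / (3 * (K + 1))) (by positivity)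
    obtain ⟨X, hXN, hXc, rfl⟩ := aux_span _ _ _ _ hyd
    have hcy : CauchySeq (fun m => (t m • A m) (X Ω)) := by
      have h1 : (fun m => (t m • A m) (X Ω)) = fun m => X (t m • A m Ω) := by
        funext m
        exact (congrArg (fun T : H →L[ℂ] H => T Ω) (hXc _ (hBN m))).symm
      rw [h1]
      exact X.uniformContinuous.comp_cauchySeq hcs
    obtain ⟨M, hM⟩ := Metric.cauchySeq_iff.1 hcy (ε / 3) (by positivity)
    refine ⟨M, fun l hl m hm => ?_⟩
    have hb : ∀ m, dist ((t m • A m) x) ((t m • A m) (X Ω)) ≤ ε / 3 := by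
      intro m
      rw [dist_eq_norm, ← map_sub]
      have h2 : ‖x - X Ω‖ ≤ ε / (3 * (K + 1)) := by
        rw [← dist_eq_norm, dist_comm]; exact (Metric.mem_ball.1 hy).le
      calc _ ≤ K * ‖x - X Ω‖ := (t m • A m).le_of_opNorm_le (hBn m) _
        _ ≤ (K + 1) * (ε / (3 * (K + 1))) := by gcongr; linarith
        _ = ε / 3 := by field_simp
    have h1 := hM l hl m hm
    have h2 := hb l
    have h3 := hb m
    rw [dist_comm] at h3
    have := dist_triangle4 ((t l • A l) x) ((t l • A l) (X Ω)) ((t m • A m) (X Ω)) ((t m • A m) x)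
    linarith
  choose f hf using fun x => cauchySeq_tendsto_of_complete (hcx x)
  let B : H →L[ℂ] H := continuousLinearMapOfTendsto (fun m => t m • A m) (tendsto_pi_nhds.2 hf)
  have hB : ∀ x, Tendsto (fun m => (t m • A m) x) atTop (𝓝 (B x)) := hf
  have hbn : ∀ m, ‖(t m • A m) Ω‖ = 1 := fun m => by
    rw [ContinuousLinearMap.smul_apply, norm_smul, ht, hAnorm, one_mul]
  have hB1 : ‖B Ω‖ = 1 := by
    have := (hB Ω).norm
    simp only [hbn] at this
    exact (tendsto_nhds_unique this tendsto_const_nhds)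
  refine ⟨t, ht, B, ?_, hB1, hB, ?_⟩
  · rw [← (N n).commutant_commutant, VonNeumannAlgebra.mem_commutant_iff]
    intro g hg
    rw [VonNeumannAlgebra.mem_commutant_iff] at hg
    ext x
    have h1 : Tendsto (fun m => g ((t m • A m) x)) atTop (𝓝 (g (B x))) :=
      (g.continuous.tendsto _).comp (hB x)
    have h2 : (fun m => g ((t m • A m) x)) = fun m => (t m • A m) (g x) := by
      funext m
      exact (congrArg (fun T : H →L[ℂ] H => T x) (hg _ (hBN m))).symm
    rw [h2] at h1
    exact tendsto_nhds_unique h1 (hB (g x))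
  · intro ε hε
    obtain ⟨M, hM⟩ := Metric.tendsto_atTop.1 (hB Ω) (ε / 2) (by positivity)
    refine ⟨M, fun m hm C _ hCn => ?_⟩
    have hd := (hM m hm).le
    rw [dist_eq_norm] at hd
    have h0 : (⟪A m Ω, C (A m Ω)⟫ : ℂ) = ⟪(t m • A m) Ω, C ((t m • A m) Ω)⟫ := by
      rw [ContinuousLinearMap.smul_apply, map_smul, inner_smul_left, inner_smul_right,
        ← mul_assoc, ← Complex.normSq_eq_conj_mul_self, Complex.normSq_eq_norm_sq, ht]
      simp
    rw [h0]
    set b := (t m • A m) Ω with hb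
    have hbb : ‖b‖ = 1 := hbn m
    have h1 : (⟪b, C b⟫ : ℂ) - ⟪B Ω, C (B Ω)⟫ = ⟪b - B Ω, C b⟫ + ⟪B Ω, C (b - B Ω)⟫ := by
      rw [map_sub, inner_sub_left, inner_sub_right]; ring
    rw [h1]
    have hCv : ∀ v, ‖C v‖ ≤ ‖v‖ := fun v => by simpa using C.le_of_opNorm_le hCn v
    have h2 : ‖(⟪b - B Ω, C b⟫ : ℂ)‖ ≤ ε / 2 := by
      refine (norm_inner_le_norm _ _).trans ?_
      have := hCv b
      rw [hbb] at this
      nlinarith [norm_nonneg (b - B Ω), norm_nonneg (C b)]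
    have h3 : ‖(⟪B Ω, C (b - B Ω)⟫ : ℂ)‖ ≤ ε / 2 := by
      refine (norm_inner_le_norm _ _).trans ?_
      rw [hB1, one_mul]
      exact (hCv _).trans hd
    refine (norm_add_le _ _).trans ?_
    linarith
end

section
/- Assume hypotheses (C), (S), (E). Let A, A_1, …, A_M ∈ 𝐍 with ‖A Ω‖ = ‖A_m Ω‖ = 1 for all m, and let p_1, …, p_M be strictly positive real numbers with ∑_{m=1}^M p_m = 1 such that ∑_{m=1}^M p_m ω_{A_m}(C) = ω_A(C) for all C ∈ 𝐍. Then ω_{A_1} = ⋯ = ω_{A_M} = ω_A; in particular, each A_m is a unimodular scalar multiple of A. Thus the states {ω_A : A ∈ 𝐍, ‖AΩ‖=1} are exactly the extreme points of their convex hull. -/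
open scoped ComplexInnerProductSpace

/-- Proposition 2.4 of the paper. Under hypotheses (C), (S), (E):
if a state `ω_A` is a convex combination `∑ p_m ω_{A_m}` with strictly positive weights,
then all `ω_{A_m}` coincide with `ω_A`; in particular each `A_m` is a unimodular scalar
multiple of `A`.  Thus the states `ω_A` are the extreme points of their convex hull. -/
theorem stmt_3 {H : Type*} [NormedAddCommGroup H] [InnerProductSpace ℂ H] [CompleteSpace H]
    [TopologicalSpace.SeparableSpace H]
    (N : ℕ → VonNeumannAlgebra H)
    (hmono : ∀ n, (N n : Set (H →L[ℂ] H)) ⊆ (N (n + 1) : Set (H →L[ℂ] H)))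
    (Ω : H) (hΩ : ‖Ω‖ = 1)
    -- Hypothesis (C)
    (hC : ∀ n : ℕ, Dense
      (Submodule.span ℂ
        {x : H | ∃ X ∈ N (n + 1), (∀ Y ∈ N n, X * Y = Y * X) ∧ x = X Ω} : Set H))
    -- Hypothesis (S)
    (hS : ∀ n : ℕ, ∀ A ∈ N n, A Ω = 0 → A = 0)
    -- Hypothesis (E)
    (hE : ∀ n : ℕ, ∃ E : H →L[ℂ] H, E ∈ N (n + 1) ∧ E ≠ 0 ∧
      IsSelfAdjoint E ∧ IsIdempotentElem E ∧
      ∀ C ∈ N n, E * C * E = ⟪Ω, C Ω⟫ • E)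
    (M : ℕ) (A : H →L[ℂ] H) (A' : Fin M → (H →L[ℂ] H))
    (hA : A ∈ ⋃ n, (N n : Set (H →L[ℂ] H)))
    (hA' : ∀ m, A' m ∈ ⋃ n, (N n : Set (H →L[ℂ] H)))
    (hAnorm : ‖A Ω‖ = 1) (hA'norm : ∀ m, ‖A' m Ω‖ = 1)
    (p : Fin M → ℝ) (hp : ∀ m, 0 < p m) (hpsum : ∑ m, p m = 1)
    (hconv : ∀ C ∈ ⋃ n, (N n : Set (H →L[ℂ] H)),
      ∑ m, (p m : ℂ) * ⟪A' m Ω, C (A' m Ω)⟫ = ⟪A Ω, C (A Ω)⟫) :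
    (∀ m, ∀ C ∈ ⋃ n, (N n : Set (H →L[ℂ] H)),
      ⟪A' m Ω, C (A' m Ω)⟫ = ⟪A Ω, C (A Ω)⟫) ∧
    (∀ m, ∃ t : ℂ, ‖t‖ = 1 ∧ A' m = t • A) := by
  have hm : ∀ i j, i ≤ j → ∀ T, T ∈ N i → T ∈ N j := by
    intro i j hij
    induction hij with
    | refl => exact fun T h => h
    | step _ ih => exact fun T h => hmono _ (ih T h)
  have key : ∀ m, ∃ t : ℂ, ‖t‖ = 1 ∧ A' m = t • A := by
    intro m
    obtain ⟨a, ha⟩ := Set.mem_iUnion.1 hA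
    obtain ⟨b, hb⟩ := Set.mem_iUnion.1 (hA' m)
    obtain ⟨n, hAn, hBn⟩ : ∃ n, A ∈ N n ∧ A' m ∈ N n :=
      ⟨max a b, hm a _ (le_max_left _ _) _ ha, hm b _ (le_max_right _ _) _ hb⟩
    have hBnorm := hA'norm m
    have hineq : ∀ C : H →L[ℂ] H, C ∈ N (n + 1) →
        p m * ‖C (A' m Ω)‖ ^ 2 ≤ ‖C (A Ω)‖ ^ 2 := by
      intro C hCn
      have h := hconv (star C * C)
        (Set.mem_iUnion.2 ⟨n + 1, mul_mem (star_mem hCn) hCn⟩)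
      have e : ∀ x : H, ⟪x, (star C * C) x⟫ = ((‖C x‖ ^ 2 : ℝ) : ℂ) := by
        intro x
        rw [ContinuousLinearMap.star_eq_adjoint, ContinuousLinearMap.mul_apply,
          ContinuousLinearMap.adjoint_inner_right, inner_self_eq_norm_sq_to_K]
        simp
      simp only [e] at h
      have h2 : ∑ m, p m * ‖C (A' m Ω)‖ ^ 2 = ‖C (A Ω)‖ ^ 2 := by exact_mod_cast h
      rw [← h2]
      exact Finset.single_le_sum (f := fun m => p m * ‖C (A' m Ω)‖ ^ 2)
        (fun i _ => mul_nonneg (hp i).le (sq_nonneg _)) (Finset.mem_univ m)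
    generalize A' m = B at hBn hBnorm hineq ⊢
    obtain ⟨E, hEn, hE0, hEsa, hEid, hEC⟩ := hE n
    obtain ⟨η, hη⟩ : ∃ η, E η ≠ 0 := by
      by_contra! h
      exact hE0 (ContinuousLinearMap.ext (by simpa using h))
    obtain ⟨ξ, hξ⟩ : ∃ ξ, ξ = E η := ⟨_, rfl⟩
    have hξ0 : ξ ≠ 0 := hξ ▸ hη
    have hEξ : E ξ = ξ := by
      rw [hξ, ← ContinuousLinearMap.mul_apply, hEid.eq]
    have hECξ : ∀ C ∈ N n, E (C ξ) = ⟪Ω, C Ω⟫ • ξ := by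
      intro C hCn
      have := DFunLike.congr_fun (hEC C hCn) ξ
      simpa [hEξ] using this
    obtain ⟨D, hD⟩ : ∃ D, D = 1 - A * E * star A := ⟨_, rfl⟩
    have hAn1 := hm n (n + 1) (Nat.le_succ n) A hAn
    have hDn : D ∈ N (n + 1) :=
      hD ▸ sub_mem (one_mem _) (mul_mem (mul_mem hAn1 hEn) (star_mem hAn1))
    have hall : ∀ x : H, p m * ‖D (B x)‖ ^ 2 ≤ ‖D (A x)‖ ^ 2 := by
      have hcl : IsClosed {x : H | p m * ‖D (B x)‖ ^ 2 ≤ ‖D (A x)‖ ^ 2} :=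
        isClosed_le (by fun_prop) (by fun_prop)
      have hden := hC n
      intro x
      refine (hcl.closure_subset_iff.2 ?_) (hden x)
      intro y hy
      have : ∃ X ∈ N (n + 1), (∀ Y ∈ N n, X * Y = Y * X) ∧ y = X Ω := by
        refine Submodule.span_induction (p := fun y _ => ∃ X ∈ N (n + 1),
          (∀ Y ∈ N n, X * Y = Y * X) ∧ y = X Ω) (fun _ h => h) ?_ ?_ ?_ hy
        · exact ⟨0, zero_mem _, by simp, by simp⟩
        · rintro _ _ _ _ ⟨X, h1, h2, rfl⟩ ⟨Z, h3, h4, rfl⟩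
          exact ⟨X + Z, add_mem h1 h3,
            fun Y hY => by rw [add_mul, mul_add, h2 Y hY, h4 Y hY], by simp⟩
        · rintro c _ _ ⟨X, h1, h2, rfl⟩
          refine ⟨c • X, ?_, fun Y hY => by rw [smul_mul_assoc, mul_smul_comm, h2 Y hY], by simp⟩
          exact (N (n + 1)).toStarSubalgebra.smul_mem h1 c
      obtain ⟨X, h1, h2, rfl⟩ := this
      have h := hineq (D * X) (mul_mem hDn h1)
      have e1 : X (A Ω) = A (X Ω) := DFunLike.congr_fun (h2 A hAn) Ω
      have e2 : X (B Ω) = B (X Ω) := DFunLike.congr_fun (h2 B hBn) Ω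
      simpa [e1, e2] using h
    have hDv : ∀ C ∈ N n, D (C ξ) = C ξ - ⟪Ω, (star A * C) Ω⟫ • A ξ := by
      intro C hCn
      have := hECξ (star A * C) (mul_mem (star_mem hAn) hCn)
      rw [ContinuousLinearMap.mul_apply] at this
      rw [hD]
      simp only [ContinuousLinearMap.sub_apply, ContinuousLinearMap.one_apply,
        ContinuousLinearMap.mul_apply] at this ⊢
      rw [this, map_smul]
    have hAA : ⟪Ω, (star A * A) Ω⟫ = 1 := by
      rw [ContinuousLinearMap.star_eq_adjoint, ContinuousLinearMap.mul_apply,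
        ContinuousLinearMap.adjoint_inner_right, inner_self_eq_norm_sq_to_K, hAnorm]
      simp
    have hz : D (B ξ) = 0 := by
      have h := hall ξ
      rw [hDv A hAn, hAA, one_smul, sub_self, norm_zero] at h
      have h3 : ‖D (B ξ)‖ ^ 2 ≤ 0 := by
        by_contra! h4
        have := mul_pos (hp m) h4
        norm_num at h
        linarith
      have h5 : ‖D (B ξ)‖ = 0 := by
        have := le_antisymm h3 (sq_nonneg _)
        exact pow_eq_zero_iff (two_ne_zero) |>.1 this
      exact norm_eq_zero.1 h5
    rw [hDv B hBn] at hz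
    generalize ⟪Ω, (star A * B) Ω⟫ = t at hz
    have hTn : B - t • A ∈ N n :=
      sub_mem hBn ((N n).toStarSubalgebra.smul_mem hAn t)
    have hT : (B - t • A) ξ = 0 := by simpa using hz
    have hTΩ : (B - t • A) Ω = 0 := by
      generalize B - t • A = T at hTn hT
      have h := hECξ (star T * T) (mul_mem (star_mem hTn) hTn)
      rw [ContinuousLinearMap.mul_apply, hT, map_zero, map_zero] at h
      have h2 := (smul_eq_zero.1 h.symm).resolve_right hξ0
      rw [ContinuousLinearMap.star_eq_adjoint, ContinuousLinearMap.mul_apply,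
        ContinuousLinearMap.adjoint_inner_right] at h2
      exact inner_self_eq_zero.1 h2
    have hBt : B = t • A := sub_eq_zero.1 (hS n _ hTn hTΩ)
    refine ⟨t, ?_, hBt⟩
    rw [hBt] at hBnorm
    simpa [norm_smul, hAnorm] using hBnorm
  refine ⟨fun m C _ => ?_, key⟩
  obtain ⟨t, ht, h⟩ := key m
  rw [h]
  simp only [ContinuousLinearMap.smul_apply, map_smul, inner_smul_left, inner_smul_right]
  rw [← mul_assoc, Complex.mul_conj', ht]
  simp
end

section
/- Let H be a complex Hilbert space and let ξ, η ∈ H be unit vectors. Then sup{ |⟨ξ, C ξ⟩ − ⟨η, C η⟩| : C ∈ B(H), ‖C‖ ≤ 1 } = 2 √(1 − |⟨ξ, η⟩|²). In other words, the norm distance of the two vector states on B(H) induced by ξ and η equals 2 √(1 − |⟨ξ, η⟩|²). -/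
open scoped ComplexInnerProductSpace

theorem aux_real {H : Type*} [NormedAddCommGroup H] [InnerProductSpace ℂ H] [CompleteSpace H]
    (ξ η : H) (hξ : ‖ξ‖ = 1) (hη : ‖η‖ = 1) (t : ℝ) (ht : ⟪ξ, η⟫ = (t : ℂ)) :
    IsGreatest {r : ℝ | ∃ C : H →L[ℂ] H, ‖C‖ ≤ 1 ∧ r = ‖⟪ξ, C ξ⟫ - ⟪η, C η⟫‖}
      (2 * Real.sqrt (1 - t ^ 2)) := by
  have ht' : ⟪η, ξ⟫ = (t : ℂ) := by rw [← inner_conj_symm, ht, Complex.conj_ofReal]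
  have h11 : ⟪ξ, ξ⟫ = (1 : ℂ) := by rw [inner_self_eq_norm_sq_to_K, hξ]; simp
  have h22 : ⟪η, η⟫ = (1 : ℂ) := by rw [inner_self_eq_norm_sq_to_K, hη]; simp
  have hp : ‖ξ + η‖ ^ 2 = 2 + 2 * t := by
    rw [@norm_add_sq ℂ, ht, hξ, hη]; simp; ring
  have hm : ‖ξ - η‖ ^ 2 = 2 - 2 * t := by
    rw [@norm_sub_sq ℂ, ht, hξ, hη]; simp; ring
  have hpm : ‖ξ + η‖ * ‖ξ - η‖ = 2 * Real.sqrt (1 - t ^ 2) := by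
    have h : 0 ≤ ‖ξ + η‖ * ‖ξ - η‖ := by positivity
    have : 1 - t ^ 2 = (‖ξ + η‖ * ‖ξ - η‖ / 2) ^ 2 := by
      rw [div_pow, mul_pow, hp, hm]; ring
    rw [this, Real.sqrt_sq (by positivity)]; ring
  rw [← hpm]
  constructor
  · by_cases h0 : ‖ξ + η‖ * ‖ξ - η‖ = 0
    · exact ⟨0, by simp, by simp [h0]⟩
    · set a := ‖ξ + η‖ with ha
      set b := ‖ξ - η‖ with hb
      have ha0 : a ≠ 0 := left_ne_zero_of_mul h0
      have hb0 : b ≠ 0 := right_ne_zero_of_mul h0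
      let w : H := (b : ℂ) • (ξ + η) + (a : ℂ) • (ξ - η)
      have hpc : (a : ℂ) ^ 2 = 2 + 2 * t := by exact_mod_cast hp
      have hmc : (b : ℂ) ^ 2 = 2 - 2 * t := by exact_mod_cast hm
      have hac : (a : ℂ) ≠ 0 := by exact_mod_cast ha0
      have hbc : (b : ℂ) ≠ 0 := by exact_mod_cast hb0
      have w1 : ⟪w, ξ⟫ = (a : ℂ) * b * (a + b) / 2 := by
        simp only [w, inner_add_left, inner_sub_left, inner_smul_left, h11, ht', Complex.conj_ofReal]
        linear_combination (-(b : ℂ) / 2) * hpc - (a : ℂ) / 2 * hmc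
      have w2 : ⟪w, η⟫ = (a : ℂ) * b * (a - b) / 2 := by
        simp only [w, inner_add_left, inner_sub_left, inner_smul_left, h22, ht, Complex.conj_ofReal]
        linear_combination (-(b : ℂ) / 2) * hpc + (a : ℂ) / 2 * hmc
      have w1' : ⟪ξ, w⟫ = (a : ℂ) * b * (a + b) / 2 := by
        rw [← inner_conj_symm, w1]; simp [Complex.conj_ofNat]
      have w2' : ⟪η, w⟫ = (a : ℂ) * b * (a - b) / 2 := by
        rw [← inner_conj_symm, w2]; simp [Complex.conj_ofNat]
      have ww : (‖w‖ : ℂ) ^ 2 = 2 * a ^ 2 * b ^ 2 := by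
        have : ⟪w, w⟫ = (‖w‖ : ℂ) ^ 2 := inner_self_eq_norm_sq_to_K w
        rw [← this]
        conv_lhs => rw [show w = (b : ℂ) • (ξ + η) + (a : ℂ) • (ξ - η) from rfl]
        rw [inner_add_left, inner_smul_left, inner_smul_left, inner_add_left, inner_sub_left,
          w1', w2', Complex.conj_ofReal, Complex.conj_ofReal]
        ring
      refine ⟨((ℂ ∙ w).reflection.toContinuousLinearEquiv : H →L[ℂ] H), ?_, ?_⟩
      · refine ContinuousLinearMap.opNorm_le_bound _ zero_le_one fun x => ?_
        simp
      · have key : ⟪ξ, (ℂ ∙ w).reflection ξ⟫ - ⟪η, (ℂ ∙ w).reflection η⟫ = ((a * b : ℝ) : ℂ) := by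
          rw [Submodule.reflection_singleton_apply, Submodule.reflection_singleton_apply]
          simp only [two_smul, inner_sub_right, inner_add_right, inner_smul_right, h11, h22, w1, w2, w1', w2']
          erw [ww]
          push_cast
          field_simp
          ring
        have : 0 ≤ a * b := by positivity
        change _ = ‖⟪ξ, (ℂ ∙ w).reflection ξ⟫ - ⟪η, (ℂ ∙ w).reflection η⟫‖
        rw [key, Complex.norm_real, Real.norm_of_nonneg this]
  · rintro r ⟨C, hC, rfl⟩
    have e : ⟪ξ, C ξ⟫ - ⟪η, C η⟫ = (1 / 2 : ℂ) * (⟪ξ + η, C (ξ - η)⟫ + ⟪ξ - η, C (ξ + η)⟫) := by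
      simp only [map_add, map_sub, inner_add_left, inner_sub_left, inner_add_right, inner_sub_right]
      ring
    have b1 : ∀ x y : H, ‖⟪x, C y⟫‖ ≤ ‖x‖ * ‖y‖ := fun x y =>
      (norm_inner_le_norm x (C y)).trans (by
        gcongr
        simpa using C.le_of_opNorm_le hC y)
    rw [e, norm_mul]
    have := norm_add_le ⟪ξ + η, C (ξ - η)⟫ ⟪ξ - η, C (ξ + η)⟫
    have h1 := b1 (ξ + η) (ξ - η)
    have h2 := b1 (ξ - η) (ξ + η)
    rw [show ‖(1 / 2 : ℂ)‖ = 1 / 2 by norm_num]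
    linarith

/-- Roberts–Roepstorff identity. For unit vectors `ξ, η` of a complex
Hilbert space `H`, the norm distance of the induced vector states on `B(H)` equals
`2 √(1 − |⟨ξ, η⟩|²)`. -/
theorem stmt_4 {H : Type*} [NormedAddCommGroup H] [InnerProductSpace ℂ H] [CompleteSpace H]
    (ξ η : H) (hξ : ‖ξ‖ = 1) (hη : ‖η‖ = 1) :
    sSup {r : ℝ | ∃ C : H →L[ℂ] H, ‖C‖ ≤ 1 ∧ r = ‖⟪ξ, C ξ⟫ - ⟪η, C η⟫‖} =
      2 * Real.sqrt (1 - ‖⟪ξ, η⟫‖ ^ 2) := by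
  obtain ⟨u, hu, hu'⟩ : ∃ u : ℂ, ‖u‖ = 1 ∧ u * ⟪ξ, η⟫ = (‖⟪ξ, η⟫‖ : ℂ) := by
    obtain ⟨u, hu, h⟩ := RCLike.exists_norm_eq_mul_self (⟪ξ, η⟫ : ℂ)
    exact ⟨u, hu, h.symm⟩
  have h := aux_real ξ (u • η) hξ (by rw [norm_smul, hu, hη, one_mul]) ‖⟪ξ, η⟫‖
    (by rw [inner_smul_right, hu'])
  have e : ∀ C : H →L[ℂ] H, ⟪u • η, C (u • η)⟫ = ⟪η, C η⟫ := fun C => by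
    rw [map_smul, inner_smul_left, inner_smul_right, ← mul_assoc, Complex.conj_mul', hu]
    simp
  simp only [e] at h
  exact h.csSup_eq
end

section
/- Let A, B ∈ 𝐍 with ‖A Ω‖ = ‖B Ω‖ = 1. Then the transition probability ω_A · ω_B := |⟨A Ω, B Ω⟩|² satisfies ω_A · ω_B ≤ 1 − (1/4) ‖ω_A − ω_B‖², where ‖ω_A − ω_B‖ = sup{|ω_A(C) − ω_B(C)| : C ∈ 𝐍, ‖C‖ ≤ 1}. -/
open scoped ComplexInnerProductSpace

theorem aux_real_s5 {H : Type*} [NormedAddCommGroup H] [InnerProductSpace ℂ H]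
    (x y : H) (hx : ‖x‖ = 1) (hy : ‖y‖ = 1) (t : ℝ) (ht : ⟪x, y⟫ = (t : ℂ))
    (C : H →L[ℂ] H) (hC : ‖C‖ ≤ 1) :
    ‖⟪x, C x⟫ - ⟪y, C y⟫‖ ^ 2 ≤ 4 * (1 - t ^ 2) := by
  have key : ⟪x, C x⟫ - ⟪y, C y⟫ = (1 / 2 : ℂ) * (⟪x + y, C (x - y)⟫ + ⟪x - y, C (x + y)⟫) := by
    simp only [map_add, map_sub, inner_add_left, inner_sub_left, inner_add_right, inner_sub_right]
    ring
  have b : ∀ u v : H, ‖⟪u, C v⟫‖ ≤ ‖u‖ * ‖v‖ := fun u v =>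
    (norm_inner_le_norm u (C v)).trans (by
      have := C.le_of_opNorm_le hC v
      rw [one_mul] at this
      gcongr)
  have h1 : ‖⟪x, C x⟫ - ⟪y, C y⟫‖ ≤ ‖x + y‖ * ‖x - y‖ := by
    rw [key, norm_mul]
    have h2 := norm_add_le ⟪x + y, C (x - y)⟫ ⟪x - y, C (x + y)⟫
    have h3 := b (x + y) (x - y)
    have h4 := b (x - y) (x + y)
    have h5 : ‖(1 / 2 : ℂ)‖ = 1 / 2 := by norm_num
    rw [h5]
    linarith
  have hp := norm_add_sq (𝕜 := ℂ) x y
  have hm := norm_sub_sq (𝕜 := ℂ) x y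
  rw [ht, hx, hy] at hp hm
  simp only [RCLike.re_to_complex, Complex.ofReal_re] at hp hm
  calc _ ≤ (‖x + y‖ * ‖x - y‖) ^ 2 := by gcongr
    _ = 4 * (1 - t ^ 2) := by rw [mul_pow, hp, hm]; ring

theorem aux_gen {H : Type*} [NormedAddCommGroup H] [InnerProductSpace ℂ H]
    (x y : H) (hx : ‖x‖ = 1) (hy : ‖y‖ = 1)
    (C : H →L[ℂ] H) (hC : ‖C‖ ≤ 1) :
    ‖⟪x, C x⟫ - ⟪y, C y⟫‖ ^ 2 ≤ 4 * (1 - ‖⟪x, y⟫‖ ^ 2) := by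
  obtain ⟨c, hc, h⟩ := RCLike.exists_norm_eq_mul_self ⟪x, y⟫
  have h1 := aux_real_s5 x (c • y) hx (by rw [norm_smul, hc, hy, one_mul]) ‖⟪x, y⟫‖
    (by rw [inner_smul_right]; exact h.symm) C hC
  have h2 : ⟪c • y, C (c • y)⟫ = ⟪y, C y⟫ := by
    rw [map_smul, inner_smul_left, inner_smul_right, ← mul_assoc, RCLike.conj_mul, hc]
    simp
  rwa [h2] at h1

/-- Proposition 3.1(ii), inequality. For `A, B ∈ 𝐍` with
`‖AΩ‖ = ‖BΩ‖ = 1`, the transition probability `ω_A · ω_B = |⟨AΩ, BΩ⟩|²` satisfies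
`ω_A · ω_B ≤ 1 − (1/4) ‖ω_A − ω_B‖²`, where the norm is the one induced by `𝐍`. -/
theorem stmt_5 {H : Type*} [NormedAddCommGroup H] [InnerProductSpace ℂ H] [CompleteSpace H]
    [TopologicalSpace.SeparableSpace H]
    (N : ℕ → VonNeumannAlgebra H)
    (hmono : ∀ n, (N n : Set (H →L[ℂ] H)) ⊆ (N (n + 1) : Set (H →L[ℂ] H)))
    (Ω : H) (hΩ : ‖Ω‖ = 1)
    (A B : H →L[ℂ] H)
    (hA : A ∈ ⋃ n, (N n : Set (H →L[ℂ] H)))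
    (hB : B ∈ ⋃ n, (N n : Set (H →L[ℂ] H)))
    (hAnorm : ‖A Ω‖ = 1) (hBnorm : ‖B Ω‖ = 1) :
    ‖⟪A Ω, B Ω⟫‖ ^ 2 ≤ 1 - (1 / 4) *
      (sSup {r : ℝ | ∃ C ∈ ⋃ n, (N n : Set (H →L[ℂ] H)), ‖C‖ ≤ 1 ∧
        r = ‖⟪A Ω, C (A Ω)⟫ - ⟪B Ω, C (B Ω)⟫‖}) ^ 2 := by
  have hle : ‖⟪A Ω, B Ω⟫‖ ≤ 1 := by
    simpa [hAnorm, hBnorm] using norm_inner_le_norm (𝕜 := ℂ) (A Ω) (B Ω)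
  have h0 : 0 ≤ 4 * (1 - ‖⟪A Ω, B Ω⟫‖ ^ 2) := by
    nlinarith [norm_nonneg ⟪A Ω, B Ω⟫]
  have hs : sSup {r : ℝ | ∃ C ∈ ⋃ n, (N n : Set (H →L[ℂ] H)), ‖C‖ ≤ 1 ∧
        r = ‖⟪A Ω, C (A Ω)⟫ - ⟪B Ω, C (B Ω)⟫‖} ≤ √(4 * (1 - ‖⟪A Ω, B Ω⟫‖ ^ 2)) := by
    apply Real.sSup_le _ (Real.sqrt_nonneg _)
    rintro r ⟨C, -, hC, rfl⟩
    exact Real.le_sqrt_of_sq_le (aux_gen _ _ hAnorm hBnorm C hC)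
  have hn : 0 ≤ sSup {r : ℝ | ∃ C ∈ ⋃ n, (N n : Set (H →L[ℂ] H)), ‖C‖ ≤ 1 ∧
        r = ‖⟪A Ω, C (A Ω)⟫ - ⟪B Ω, C (B Ω)⟫‖} := by
    apply Real.sSup_nonneg
    rintro r ⟨C, -, hC, rfl⟩
    exact norm_nonneg _
  have h2 := pow_le_pow_left₀ hn hs 2
  rw [Real.sq_sqrt h0] at h2
  linarith
end

section
/- Suppose in addition that the commutant of 𝐍 in B(H) is trivial, i.e. every bounded operator on H commuting with all elements of 𝐍 is a scalar multiple of the identity. Then for all A, B ∈ 𝐍 with ‖A Ω‖ = ‖B Ω‖ = 1 one has the equality |⟨A Ω, B Ω⟩|² = 1 − (1/4) ‖ω_A − ω_B‖², where ‖ω_A − ω_B‖ = sup{|ω_A(C) − ω_B(C)| : C ∈ 𝐍, ‖C‖ ≤ 1}. -/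
open scoped ComplexInnerProductSpace

theorem dens {H : Type*} [NormedAddCommGroup H] [InnerProductSpace ℂ H] [CompleteSpace H]
    (M : StarSubalgebra ℂ (H →L[ℂ] H))
    (htriv : ∀ V : H →L[ℂ] H, (∀ X ∈ M, V * X = X * V) → ∃ c : ℂ, V = c • (1 : H →L[ℂ] H))
    {n : ℕ} (x : Fin n → H) (S : H →L[ℂ] H) :
    (fun i => S (x i)) ∈ closure {y : Fin n → H | ∃ T ∈ M, y = fun i => T (x i)} := by
  classical
  let E := PiLp 2 (fun _ : Fin n => H)
  let e : E ≃L[ℂ] (Fin n → H) := PiLp.continuousLinearEquiv 2 ℂ (fun _ : Fin n => H)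
  let D : (H →L[ℂ] H) → (E →L[ℂ] E) := fun T =>
    (e.symm : (Fin n → H) →L[ℂ] E) ∘L
      (ContinuousLinearMap.pi fun i => T ∘L ContinuousLinearMap.proj i) ∘L (e : E →L[ℂ] (Fin n → H))
  have hD : ∀ T k i, (D T k) i = T (k i) := fun T k i => rfl
  let X : E := e.symm x
  let W : Submodule ℂ E :=
    { carrier := {y | ∃ T ∈ M, y = D T X}
      add_mem' := by
        rintro _ _ ⟨T, hT, rfl⟩ ⟨T', hT', rfl⟩
        exact ⟨T + T', add_mem hT hT', rfl⟩
      zero_mem' := ⟨0, zero_mem _, by ext i; simp [hD]⟩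
      smul_mem' := by
        rintro c _ ⟨T, hT, rfl⟩
        exact ⟨c • T, M.smul_mem hT c, rfl⟩ }
  let K := W.topologicalClosure
  have hinv : ∀ T ∈ M, ∀ k ∈ K, D T k ∈ K := by
    intro T hT k hk
    refine map_mem_closure (D T).continuous hk ?_
    rintro _ ⟨T', hT', rfl⟩
    exact ⟨T * T', mul_mem hT hT', by ext i; simp [hD]⟩
  have hadj : ∀ (T : H →L[ℂ] H) (k l : E), ⟪k, D T l⟫ = ⟪D (star T) k, l⟫ := by
    intro T k l
    change (∑ i, ⟪k i, T (l i)⟫) = ∑ i, ⟪(star T) (k i), l i⟫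
    refine Finset.sum_congr rfl fun i _ => ?_
    rw [ContinuousLinearMap.star_eq_adjoint, ContinuousLinearMap.adjoint_inner_left]
  have : CompleteSpace K := W.isClosed_topologicalClosure.completeSpace_coe
  let P := K.starProjection
  have hP : ∀ T ∈ M, ∀ k, P (D T k) = D T (P k) := by
    intro T hT k
    refine Submodule.eq_starProjection_of_mem_orthogonal (hinv T hT _ (K.starProjection_apply_mem k)) ?_
    rw [← map_sub, Submodule.mem_orthogonal]
    intro u hu
    rw [hadj]
    exact (Submodule.mem_orthogonal _ _).1 (K.sub_starProjection_mem_orthogonal k) _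
      (hinv _ (star_mem hT) u hu)
  let ι : Fin n → (H →L[ℂ] E) := fun j =>
    (e.symm : (Fin n → H) →L[ℂ] E) ∘L ContinuousLinearMap.single ℂ (fun _ : Fin n => H) j
  have hι : ∀ T j y, D T (ι j y) = ι j (T y) := by
    intro T j y
    ext i
    rw [hD]
    change T (Pi.single (M := fun _ => H) j y i) = Pi.single (M := fun _ => H) j (T y) i
    by_cases h : i = j
    · subst h; simp
    · simp [h]
  let pr : Fin n → (E →L[ℂ] H) := fun i => ContinuousLinearMap.proj i ∘L (e : E →L[ℂ] (Fin n → H))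
  have hent : ∀ i j, ∃ c : ℂ, pr i ∘L P ∘L ι j = c • (1 : H →L[ℂ] H) := by
    intro i j
    apply htriv
    intro T hT
    ext y
    change (P (ι j (T y))) i = T ((P (ι j y)) i)
    rw [← hι, hP T hT, hD]
  choose c hc using hent
  have hc' : ∀ i j y, (P (ι j y)) i = c i j • y := fun i j y => by
    have := congrArg (fun f => f y) (hc i j)
    exact this
  have hS : ∀ k, P (D S k) = D S (P k) := by
    intro k
    have hk : k = ∑ j, ι j (k j) := by
      ext i
      change k i = pr i (∑ j, ι j (k j))
      rw [map_sum]
      change k i = ∑ j, Pi.single (M := fun _ => H) j (k j) i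
      simp
    rw [hk]
    simp only [map_sum]
    refine Finset.sum_congr rfl fun j _ => ?_
    ext i
    rw [hι, hc', hD, hc', map_smul]
  have hX : X ∈ K := W.le_topologicalClosure ⟨1, one_mem _, by ext i; simp [hD]⟩
  have hSX : D S X ∈ K := by
    have := hS X
    rw [Submodule.starProjection_eq_self_iff.2 hX] at this
    rw [← this]
    exact K.starProjection_apply_mem _
  have := map_mem_closure (t := {y : Fin n → H | ∃ T ∈ M, y = fun i => T (x i)}) e.continuous hSX ?_
  · exact this
  · rintro _ ⟨T, hT, rfl⟩
    exact ⟨T, hT, rfl⟩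

theorem cfc_norm_le {H : Type*} [NormedAddCommGroup H] [InnerProductSpace ℂ H] [CompleteSpace H]
    (T : H →L[ℂ] H) (hT : IsSelfAdjoint T) (f g : ℝ → ℝ) (hf : Continuous f) (hg : Continuous g)
    (hfg : ∀ t, |f t| ≤ |g t|) (x : H) : ‖cfc f T x‖ ≤ ‖cfc g T x‖ := by
  have key : ∀ h : ℝ → ℝ, Continuous h → ‖cfc h T x‖ ^ 2 = RCLike.re ⟪cfc (fun t => h t * h t) T x, x⟫ := by
    intro h hh
    rw [cfc_mul h h T hh.continuousOn hh.continuousOn]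
    have hsa : IsSelfAdjoint (cfc h T) := cfc_predicate h T
    rw [mul_apply_eq_comp, ← ContinuousLinearMap.adjoint_inner_right, ← ContinuousLinearMap.star_eq_adjoint, hsa.star_eq,
      inner_self_eq_norm_sq]
  have hle : cfc (fun t => f t * f t) T ≤ cfc (fun t => g t * g t) T := by
    apply cfc_mono
    · intro t _
      nlinarith [abs_mul_abs_self (f t), abs_mul_abs_self (g t), hfg t, abs_nonneg (f t)]
    · exact (hf.mul hf).continuousOn
    · exact (hg.mul hg).continuousOn
  have h2 := (ContinuousLinearMap.le_def _ _).1 hle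
  have h3 := h2.re_inner_nonneg_left x
  rw [sub_apply, inner_sub_left, map_sub, ← key f hf, ← key g hg] at h3
  exact le_of_sq_le_sq (by linarith) (norm_nonneg _)

theorem clampT {H : Type*} [NormedAddCommGroup H] [InnerProductSpace ℂ H] [CompleteSpace H]
    (N : VonNeumannAlgebra H) (T : H →L[ℂ] H) (hT : IsSelfAdjoint T) (hTN : T ∈ N) :
    ∃ C ∈ N, IsSelfAdjoint C ∧ ‖C‖ ≤ 1 ∧ (∀ x, ‖C x - x‖ ≤ ‖T x - x‖) ∧
      ∀ x, ‖C x + x‖ ≤ ‖T x + x‖ := by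
  let g : ℝ → ℝ := fun t => max (-1) (min 1 t)
  have hg : Continuous g := by fun_prop
  refine ⟨cfc g T, ?_, cfc_predicate g T, ?_, ?_, ?_⟩
  · rw [← SetLike.mem_coe, ← N.centralizer_centralizer]
    intro V hV
    have : Commute T V := hV T hTN
    exact ((this.cfc_real g).eq).symm
  · apply norm_cfc_le zero_le_one
    intro t _
    rw [Real.norm_eq_abs, abs_le]
    exact ⟨le_max_left _ _, max_le (by norm_num) (min_le_left _ _)⟩
  · intro x
    have := cfc_norm_le T hT (fun t => g t - 1) (fun t => t - 1) (by fun_prop) (by fun_prop) ?_ x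
    · rw [cfc_sub g (fun _ => 1) T, cfc_sub (fun t => t) (fun _ => 1) T, cfc_const_one ℝ T, cfc_id' ℝ T] at this
      simpa using this
    · intro t
      simp only [g]
      grind
  · intro x
    have := cfc_norm_le T hT (fun t => g t + 1) (fun t => t + 1) (by fun_prop) (by fun_prop) ?_ x
    · rw [cfc_add T g (fun _ => 1), cfc_add T (fun t => t) (fun _ => 1), cfc_const_one ℝ T, cfc_id' ℝ T] at this
      simpa using this
    · intro t
      simp only [g]
      grind

theorem dens_sa {H : Type*} [NormedAddCommGroup H] [InnerProductSpace ℂ H] [CompleteSpace H]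
    (M : StarSubalgebra ℂ (H →L[ℂ] H))
    (htriv : ∀ V : H →L[ℂ] H, (∀ X ∈ M, V * X = X * V) → ∃ c : ℂ, V = c • (1 : H →L[ℂ] H))
    (x y : H) (S : H →L[ℂ] H) (hS : IsSelfAdjoint S) :
    (S x, S y) ∈ closure {z : H × H | ∃ T ∈ M, IsSelfAdjoint T ∧ z = (T x, T y)} := by
  by_contra hcon
  set W := {z : H × H | ∃ T ∈ M, IsSelfAdjoint T ∧ z = (T x, T y)} with hW
  have hsm : ∀ (r : ℝ) T, T ∈ M → IsSelfAdjoint T → ((r : ℂ) • T) ∈ M ∧ IsSelfAdjoint ((r : ℂ) • T) := by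
    intro r T hT hs
    refine ⟨M.smul_mem hT _, ?_⟩
    rw [IsSelfAdjoint, star_smul, hs.star_eq]
    simp
  have hconv : Convex ℝ W := by
    rintro _ ⟨T, hT, hs, rfl⟩ _ ⟨T', hT', hs', rfl⟩ a b _ _ _
    refine ⟨(a : ℂ) • T + (b : ℂ) • T', add_mem (hsm a T hT hs).1 (hsm b T' hT' hs').1,
      (hsm a T hT hs).2.add (hsm b T' hT' hs').2, ?_⟩
    ext <;> simp
  obtain ⟨f, u, hf, hfx⟩ := RCLike.geometric_hahn_banach_closed_point (𝕜 := ℂ) hconv.closure isClosed_closure hcon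
  have hz : ∀ T ∈ M, IsSelfAdjoint T → RCLike.re (f (T x, T y)) = 0 := by
    intro T hT hs
    by_contra hne
    set r := RCLike.re (f (T x, T y)) with hr
    have := hf _ (subset_closure ⟨((u / r : ℝ) : ℂ) • T, (hsm (u/r) T hT hs).1, (hsm (u/r) T hT hs).2, rfl⟩)
    have h2 : f ((((u / r : ℝ) : ℂ) • T) x, (((u / r : ℝ) : ℂ) • T) y) = ((u / r : ℝ) : ℂ) * f (T x, T y) := by
      rw [← smul_eq_mul, ← map_smul]; rfl
    rw [h2] at this
    simp only [RCLike.re_to_complex, Complex.re_ofReal_mul] at this hr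
    rw [← hr, div_mul_cancel₀ _ hne] at this
    exact lt_irrefl _ this
  have hu : 0 < u := by
    have := hf _ (subset_closure ⟨0, zero_mem _, IsSelfAdjoint.zero _, rfl⟩)
    have h00 : f ((0 : H →L[ℂ] H) x, (0 : H →L[ℂ] H) y) = 0 := map_zero f
    rw [h00] at this
    simpa using this
  let p := (InnerProductSpace.toDual ℂ H).symm (f ∘L ContinuousLinearMap.inl ℂ H H)
  let q := (InnerProductSpace.toDual ℂ H).symm (f ∘L ContinuousLinearMap.inr ℂ H H)
  have hpq : ∀ a b, f (a, b) = ⟪p, a⟫ + ⟪q, b⟫ := by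
    intro a b
    simp only [p, q, InnerProductSpace.toDual_symm_apply]
    simp [← map_add]
  let F : (Fin 4 → H) → ℝ := fun v => RCLike.re (⟪p, v 0⟫ + ⟪q, v 1⟫ + (⟪v 2, x⟫ + ⟪v 3, y⟫))
  have hF : Continuous F := by fun_prop
  have hFT : ∀ T : H →L[ℂ] H, F (fun i => T (![x, y, p, q] i)) = RCLike.re (f ((T + star T) x, (T + star T) y)) := by
    intro T
    rw [hpq]
    simp only [F, add_apply, inner_add_right, ContinuousLinearMap.star_eq_adjoint,
      ContinuousLinearMap.adjoint_inner_right, Matrix.cons_val]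
    congr 1
    ring
  have hsub : {y' : Fin 4 → H | ∃ T ∈ M, y' = fun i => T (![x, y, p, q] i)} ⊆ F ⁻¹' {0} := by
    rintro _ ⟨T, hT, rfl⟩
    rw [Set.mem_preimage, Set.mem_singleton_iff]
    rw [hFT]
    exact hz _ (add_mem hT (star_mem hT)) (IsSelfAdjoint.add_star_self T)
  have h0 := closure_minimal hsub (isClosed_singleton.preimage hF) (dens M htriv ![x, y, p, q] S)
  rw [Set.mem_preimage, Set.mem_singleton_iff] at h0
  rw [hFT, hS.star_eq] at h0
  have : f ((S + S) x, (S + S) y) = f (S x, S y) + f (S x, S y) := by rw [← map_add]; rfl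
  rw [this, map_add] at h0
  linarith

theorem exists_swapOp {H : Type*} [NormedAddCommGroup H] [InnerProductSpace ℂ H] [CompleteSpace H]
    (N : ℕ → VonNeumannAlgebra H)
    (hmono : ∀ n, (N n : Set (H →L[ℂ] H)) ⊆ (N (n + 1) : Set (H →L[ℂ] H)))
    (htriv : ∀ V : H →L[ℂ] H,
      (∀ X ∈ ⋃ n, (N n : Set (H →L[ℂ] H)), V * X = X * V) →
      ∃ c : ℂ, V = c • (1 : H →L[ℂ] H))
    (p q : H) (hp : ‖p‖ = 1) (hq : ‖q‖ = 1) (hpq : ⟪p, q⟫ = 0) (δ : ℝ) (hδ : 0 < δ) :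
    ∃ C ∈ ⋃ n, (N n : Set (H →L[ℂ] H)), IsSelfAdjoint C ∧ ‖C‖ ≤ 1 ∧ ‖C q - p‖ < δ := by
  have hm : Monotone fun n => (N n : Set (H →L[ℂ] H)) := monotone_nat_of_le_succ hmono
  let M : StarSubalgebra ℂ (H →L[ℂ] H) :=
    { carrier := ⋃ n, (N n : Set (H →L[ℂ] H))
      mul_mem' := by
        intro a b ha hb
        obtain ⟨i, hi⟩ := Set.mem_iUnion.1 ha
        obtain ⟨j, hj⟩ := Set.mem_iUnion.1 hb
        exact Set.mem_iUnion.2 ⟨max i j, mul_mem (S := VonNeumannAlgebra H) (hm (le_max_left i j) hi) (hm (le_max_right i j) hj)⟩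
      add_mem' := by
        intro a b ha hb
        obtain ⟨i, hi⟩ := Set.mem_iUnion.1 ha
        obtain ⟨j, hj⟩ := Set.mem_iUnion.1 hb
        exact Set.mem_iUnion.2 ⟨max i j, add_mem (S := VonNeumannAlgebra H) (hm (le_max_left i j) hi) (hm (le_max_right i j) hj)⟩
      algebraMap_mem' := fun r => Set.mem_iUnion.2 ⟨0, (N 0).algebraMap_mem' r⟩
      star_mem' := by
        intro a ha
        obtain ⟨i, hi⟩ := Set.mem_iUnion.1 ha
        exact Set.mem_iUnion.2 ⟨i, (N i).star_mem' hi⟩ }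
  have hqp : ⟪q, p⟫ = 0 := by rw [← inner_conj_symm, hpq, map_zero]
  have hpp : ⟪p, p⟫ = 1 := by rw [inner_self_eq_norm_sq_to_K, hp]; simp
  have hqq : ⟪q, q⟫ = 1 := by rw [inner_self_eq_norm_sq_to_K, hq]; simp
  let R : H →L[ℂ] H := (innerSL ℂ q).smulRight p
  let R' : H →L[ℂ] H := (innerSL ℂ p).smulRight q
  have hR : ∀ v, (R + R') v = ⟪q, v⟫ • p + ⟪p, v⟫ • q := fun v => rfl
  have hS : IsSelfAdjoint (R + R') := by
    rw [ContinuousLinearMap.isSelfAdjoint_iff_isSymmetric]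
    intro v w
    change ⟪(R + R') v, w⟫ = ⟪v, (R + R') w⟫
    rw [hR, hR]
    simp only [inner_add_left, inner_add_right, inner_smul_left, inner_smul_right, inner_conj_symm]
    ring
  have hd := dens_sa M htriv (p + q) (p - q) _ hS
  obtain ⟨_, ⟨T, hT, hTs, rfl⟩, hdist⟩ := Metric.mem_closure_iff.1 hd δ hδ
  have e1 : (R + R') (p + q) = p + q := by
    rw [hR, inner_add_right, inner_add_right, hpp, hqq, hpq, hqp]; module
  have e2 : (R + R') (p - q) = -(p - q) := by
    rw [hR, inner_sub_right, inner_sub_right, hpp, hqq, hpq, hqp]; module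
  rw [e1, e2, dist_comm, Prod.dist_eq, max_lt_iff, dist_eq_norm, dist_eq_norm] at hdist
  obtain ⟨d1, d2⟩ := hdist
  simp only [sub_neg_eq_add] at d1 d2
  obtain ⟨n, hn⟩ := Set.mem_iUnion.1 hT
  obtain ⟨C, hC, hCs, hC1, hm1, hp1⟩ := clampT (N n) T hTs hn
  refine ⟨C, Set.mem_iUnion.2 ⟨n, hC⟩, hCs, hC1, ?_⟩
  have f1 := (hm1 (p + q)).trans_lt d1
  have f2 := (hp1 (p - q)).trans_lt d2
  have : (2 : ℂ) • (C q - p) = (C (p + q) - (p + q)) - (C (p - q) + (p - q)) := by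
    simp only [map_add, map_sub]
    module
  have h := norm_sub_le (C (p + q) - (p + q)) (C (p - q) + (p - q))
  rw [← this, norm_smul] at h
  simp at h
  simp at f1 f2
  linarith

theorem core {H : Type*} [NormedAddCommGroup H] [InnerProductSpace ℂ H] [CompleteSpace H]
    (N : ℕ → VonNeumannAlgebra H)
    (hmono : ∀ n, (N n : Set (H →L[ℂ] H)) ⊆ (N (n + 1) : Set (H →L[ℂ] H)))
    (htriv : ∀ V : H →L[ℂ] H,
      (∀ X ∈ ⋃ n, (N n : Set (H →L[ℂ] H)), V * X = X * V) →
      ∃ c : ℂ, V = c • (1 : H →L[ℂ] H))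
    (a b : H) (ha : ‖a‖ = 1) (hb : ‖b‖ = 1) (r : ℝ) (hr : 0 ≤ r) (hab : ⟪a, b⟫ = (r : ℂ)) :
    r ^ 2 = 1 - (1 / 4) *
      (sSup {r : ℝ | ∃ C ∈ ⋃ n, (N n : Set (H →L[ℂ] H)), ‖C‖ ≤ 1 ∧
        r = ‖⟪a, C a⟫ - ⟪b, C b⟫‖}) ^ 2 := by
  have hba : ⟪b, a⟫ = (r : ℂ) := by rw [← inner_conj_symm, hab]; simp
  have haa : ⟪a, a⟫ = 1 := by rw [inner_self_eq_norm_sq_to_K, ha]; simp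
  have hbb : ⟪b, b⟫ = 1 := by rw [inner_self_eq_norm_sq_to_K, hb]; simp
  set p := a + b with hp
  set q := a - b with hq
  have hpq : ⟪p, q⟫ = 0 := by
    rw [hp, hq, inner_add_left, inner_sub_right, inner_sub_right, hab, hba, haa, hbb]; ring
  have hp2 : ‖p‖ ^ 2 = 2 + 2 * r := by
    rw [hp, norm_add_sq (𝕜 := ℂ), ha, hb, hab]; simp; ring
  have hq2 : ‖q‖ ^ 2 = 2 - 2 * r := by
    rw [hq, norm_sub_sq (𝕜 := ℂ), ha, hb, hab]; simp; ring
  have hid : ∀ C : H →L[ℂ] H, ⟪a, C a⟫ - ⟪b, C b⟫ = (⟪p, C q⟫ + ⟪q, C p⟫) / 2 := by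
    intro C
    simp only [hp, hq, map_add, map_sub, inner_add_left, inner_sub_left, inner_add_right, inner_sub_right]
    ring
  set Z := {r : ℝ | ∃ C ∈ ⋃ n, (N n : Set (H →L[ℂ] H)), ‖C‖ ≤ 1 ∧
        r = ‖⟪a, C a⟫ - ⟪b, C b⟫‖} with hZ
  have hub : ∀ s ∈ Z, s ≤ ‖p‖ * ‖q‖ := by
    rintro _ ⟨C, -, hC, rfl⟩
    rw [hid, norm_div]
    have h1 : ‖⟪p, C q⟫‖ ≤ ‖p‖ * ‖q‖ :=
      (norm_inner_le_norm _ _).trans (mul_le_mul_of_nonneg_left ((C.le_of_opNorm_le hC q).trans_eq (one_mul _)) (norm_nonneg _))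
    have h2 : ‖⟪q, C p⟫‖ ≤ ‖q‖ * ‖p‖ :=
      (norm_inner_le_norm _ _).trans (mul_le_mul_of_nonneg_left ((C.le_of_opNorm_le hC p).trans_eq (one_mul _)) (norm_nonneg _))
    have h3 := norm_add_le ⟪p, C q⟫ ⟪q, C p⟫
    simp only [Complex.norm_ofNat]
    linarith
  have hne : Z.Nonempty := ⟨_, 0, Set.mem_iUnion.2 ⟨0, zero_mem (N 0)⟩, by simp, rfl⟩
  have hsup : sSup Z = ‖p‖ * ‖q‖ := by
    refine le_antisymm (csSup_le hne hub) ?_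
    have hp0 : 0 < ‖p‖ := by
      by_contra h
      have : ‖p‖ = 0 := le_antisymm (not_lt.1 h) (norm_nonneg _)
      rw [this] at hp2; norm_num at hp2; linarith
    rcases (norm_nonneg q).eq_or_lt with h0 | hq0
    · rw [← h0, mul_zero]
      apply Real.sSup_nonneg
      rintro _ ⟨C, -, hC, rfl⟩
      exact norm_nonneg _
    refine le_of_forall_pos_le_add fun ε hε => ?_
    have hk : 0 < ‖p‖ * ‖q‖ := mul_pos hp0 hq0
    set p' : H := ((‖p‖⁻¹ : ℝ) : ℂ) • p with hp'
    set q' : H := ((‖q‖⁻¹ : ℝ) : ℂ) • q with hq'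
    have np : ‖p'‖ = 1 := by rw [hp', norm_smul]; simp [hp0.ne']
    have nq : ‖q'‖ = 1 := by rw [hq', norm_smul]; simp [hq0.ne']
    have epp : p = (‖p‖ : ℂ) • p' := by
      rw [hp', smul_smul, ← Complex.ofReal_mul, mul_inv_cancel₀ hp0.ne']; simp
    have eqq : q = (‖q‖ : ℂ) • q' := by
      rw [hq', smul_smul, ← Complex.ofReal_mul, mul_inv_cancel₀ hq0.ne']; simp
    obtain ⟨C, hC, hCs, hC1, hCd⟩ := exists_swapOp N hmono htriv p' q' np nq
      (by rw [hp', hq', inner_smul_left, inner_smul_right, hpq]; simp) (ε / (‖p‖ * ‖q‖)) (by positivity)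
    have hle : ‖⟪a, C a⟫ - ⟪b, C b⟫‖ ≤ sSup Z := le_csSup ⟨_, hub⟩ ⟨C, hC, hC1, rfl⟩
    have hsym : ⟪q, C p⟫ = starRingEnd ℂ ⟪p, C q⟫ := by
      rw [inner_conj_symm, ← ContinuousLinearMap.adjoint_inner_left, ← ContinuousLinearMap.star_eq_adjoint, hCs.star_eq]
    have hre : (⟪a, C a⟫ - ⟪b, C b⟫).re = ‖p‖ * ‖q‖ * (⟪p', C q'⟫).re := by
      rw [hid, hsym, Complex.add_conj]
      have : ⟪p, C q⟫ = ((‖p‖ * ‖q‖ : ℝ) : ℂ) * ⟪p', C q'⟫ := by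
        conv_lhs => rw [epp, eqq]
        rw [map_smul, inner_smul_left, inner_smul_right]
        simp; ring
      rw [this, Complex.re_ofReal_mul]
      simp
    have h1 : ⟪p', C q'⟫ = 1 + ⟪p', C q' - p'⟫ := by
      rw [inner_sub_right, inner_self_eq_norm_sq_to_K, np]; simp
    have h2 : ‖⟪p', C q' - p'⟫‖ ≤ ε / (‖p‖ * ‖q‖) := by
      refine (norm_inner_le_norm _ _).trans ?_
      rw [np, one_mul]; exact hCd.le
    have h3 : 1 - ε / (‖p‖ * ‖q‖) ≤ (⟪p', C q'⟫).re := by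
      rw [h1, Complex.add_re, Complex.one_re]
      have := (abs_le.1 ((Complex.abs_re_le_norm _).trans h2)).1
      linarith
    have h4 := mul_le_mul_of_nonneg_left h3 hk.le
    rw [← hre, mul_sub, mul_one, mul_div_cancel₀ _ hk.ne'] at h4
    have := Complex.re_le_norm (⟪a, C a⟫ - ⟪b, C b⟫)
    linarith
  rw [hsup, mul_pow, hp2, hq2]
  ring

/-- Proposition 3.1(ii), equality for pure `ω`. If the commutant of
`𝐍` in `B(H)` is trivial, then for all `A, B ∈ 𝐍` with `‖AΩ‖ = ‖BΩ‖ = 1` one has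
`|⟨AΩ, BΩ⟩|² = 1 − (1/4) ‖ω_A − ω_B‖²`. -/
theorem stmt_6 {H : Type*} [NormedAddCommGroup H] [InnerProductSpace ℂ H] [CompleteSpace H]
    [TopologicalSpace.SeparableSpace H]
    (N : ℕ → VonNeumannAlgebra H)
    (hmono : ∀ n, (N n : Set (H →L[ℂ] H)) ⊆ (N (n + 1) : Set (H →L[ℂ] H)))
    (Ω : H) (hΩ : ‖Ω‖ = 1)
    -- the commutant of `𝐍 = ⋃ n, N n` in `B(H)` is trivial
    (htriv : ∀ V : H →L[ℂ] H,
      (∀ X ∈ ⋃ n, (N n : Set (H →L[ℂ] H)), V * X = X * V) →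
      ∃ c : ℂ, V = c • (1 : H →L[ℂ] H))
    (A B : H →L[ℂ] H)
    (hA : A ∈ ⋃ n, (N n : Set (H →L[ℂ] H)))
    (hB : B ∈ ⋃ n, (N n : Set (H →L[ℂ] H)))
    (hAnorm : ‖A Ω‖ = 1) (hBnorm : ‖B Ω‖ = 1) :
    ‖⟪A Ω, B Ω⟫‖ ^ 2 = 1 - (1 / 4) *
      (sSup {r : ℝ | ∃ C ∈ ⋃ n, (N n : Set (H →L[ℂ] H)), ‖C‖ ≤ 1 ∧
        r = ‖⟪A Ω, C (A Ω)⟫ - ⟪B Ω, C (B Ω)⟫‖}) ^ 2 := by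
  obtain ⟨c, hc, hcz⟩ : ∃ c : ℂ, ‖c‖ = 1 ∧ c * ⟪A Ω, B Ω⟫ = (‖⟪A Ω, B Ω⟫‖ : ℂ) := by
    obtain ⟨c, hc, h⟩ := RCLike.exists_norm_mul_eq_self ⟪A Ω, B Ω⟫
    have hcc : (starRingEnd ℂ c) * c = 1 := by
      rw [Complex.conj_mul', hc]; simp
    refine ⟨starRingEnd ℂ c, by simpa using hc, ?_⟩
    conv_lhs => rw [← h]
    rw [← mul_assoc, hcc, one_mul]; rfl
  have hcc : c * (starRingEnd ℂ c) = 1 := by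
    rw [Complex.mul_conj', hc]; simp
  have key := core N hmono htriv (A Ω) (c • B Ω) hAnorm (by rw [norm_smul, hc, hBnorm, one_mul])
    ‖⟪A Ω, B Ω⟫‖ (norm_nonneg _) (by rw [inner_smul_right, hcz])
  have e : ∀ C : H →L[ℂ] H, ⟪c • B Ω, C (c • B Ω)⟫ = ⟪B Ω, C (B Ω)⟫ := by
    intro C
    rw [map_smul, inner_smul_left, inner_smul_right, ← mul_assoc, mul_comm _ c, hcc, one_mul]
  simp only [e] at key
  exact key
end

section
/- Let N ⊆ B(H) be a unital *-subalgebra, let Ω ∈ H be a unit vector with {A Ω : A ∈ N} dense in H, and let V ∈ B(H) be a unitary operator that commutes with every element of N and is not a scalar multiple of the identity. Then |⟨Ω, V Ω⟩| < 1, and there exists a sequence A_m ∈ N with ‖A_m Ω‖ = 1 such that ‖ω_{A_m} − ω‖ → 0 while lim_m |⟨Ω, A_m Ω⟩| = |⟨Ω, V Ω⟩| < 1. In particular, the equality |⟨A Ω, B Ω⟩|² = 1 − (1/4)‖ω_A − ω_B‖² fails for some pairs of states when the commutant of N is nontrivial. -/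
open scoped ComplexInnerProductSpace

open Filter Topology

/-- from the proof of Proposition 3.1(ii). If `Ω` is cyclic for a unital
*-subalgebra `N ⊆ B(H)` and `V` is a non-scalar unitary commuting with `N`, then
`|⟨Ω, VΩ⟩| < 1` and there are `A_m ∈ N` with `‖A_m Ω‖ = 1` such that `‖ω_{A_m} − ω‖ → 0`
while `|⟨Ω, A_m Ω⟩| → |⟨Ω, VΩ⟩| < 1`. -/
theorem stmt_7 {H : Type*} [NormedAddCommGroup H] [InnerProductSpace ℂ H] [CompleteSpace H]
    (N : StarSubalgebra ℂ (H →L[ℂ] H))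
    (Ω : H) (hΩ : ‖Ω‖ = 1)
    (hcyc : Dense {x : H | ∃ A ∈ N, x = A Ω})
    (V : H →L[ℂ] H) (hVu : V ∈ unitary (H →L[ℂ] H))
    (hVcomm : ∀ X ∈ N, V * X = X * V)
    (hVns : ¬ ∃ c : ℂ, V = c • (1 : H →L[ℂ] H)) :
    ‖⟪Ω, V Ω⟫‖ < 1 ∧
    ∃ A : ℕ → (H →L[ℂ] H), (∀ m, A m ∈ N) ∧ (∀ m, ‖A m Ω‖ = 1) ∧
      -- `‖ω_{A_m} − ω‖ → 0` for the norm induced by `N`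
      (∀ ε : ℝ, 0 < ε → ∃ M : ℕ, ∀ m ≥ M, ∀ C ∈ N, ‖C‖ ≤ 1 →
        ‖⟪A m Ω, C (A m Ω)⟫ - ⟪Ω, C Ω⟫‖ ≤ ε) ∧
      Tendsto (fun m => ‖⟪Ω, A m Ω⟫‖) atTop (𝓝 ‖⟪Ω, V Ω⟫‖) := by
  have hVin : ∀ x y : H, ⟪V x, V y⟫ = ⟪x, y⟫ := by
    intro x y
    have h1 : star V * V = 1 := (Unitary.mem_iff.mp hVu).1
    have h2 : (star V) (V y) = y := by
      have := congrArg (fun T : H →L[ℂ] H => T y) h1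
      simpa using this
    rw [ContinuousLinearMap.star_eq_adjoint] at h2
    rw [← ContinuousLinearMap.adjoint_inner_right, h2]
  have hVcomm' : ∀ X ∈ N, ∀ x, V (X x) = X (V x) := by
    intro X hX x
    have := congrArg (fun T : H →L[ℂ] H => T x) (hVcomm X hX)
    simpa using this
  have hVΩ : ‖V Ω‖ = 1 := by
    have h := hVin Ω Ω
    rw [inner_self_eq_norm_sq_to_K, inner_self_eq_norm_sq_to_K, hΩ] at h
    have h' : ‖V Ω‖ ^ 2 = 1 ^ 2 := by exact_mod_cast h
    exact (pow_left_inj₀ (norm_nonneg _) zero_le_one two_ne_zero).mp h'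
  have hΩ0 : Ω ≠ 0 := by
    intro h
    simp [h] at hΩ
  have hVΩ0 : V Ω ≠ 0 := by
    intro h
    simp [h] at hVΩ
  refine ⟨?_, ?_⟩
  · refine lt_of_le_of_ne ?_ ?_
    · have := norm_inner_le_norm (𝕜 := ℂ) Ω (V Ω)
      rwa [hΩ, hVΩ, one_mul] at this
    · intro h
      have h' : ‖⟪Ω, V Ω⟫‖ = ‖Ω‖ * ‖V Ω‖ := by rw [h, hΩ, hVΩ, one_mul]
      obtain ⟨c, -, hc⟩ := (norm_inner_eq_norm_iff hΩ0 hVΩ0).mp h'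
      apply hVns
      refine ⟨c, ?_⟩
      have hfun : (V : H → H) = (c • (1 : H →L[ℂ] H) : H →L[ℂ] H) := by
        refine Continuous.ext_on hcyc V.continuous (ContinuousLinearMap.continuous _) ?_
        rintro x ⟨X, hX, rfl⟩
        rw [hVcomm' X hX, hc]
        simp
      exact DFunLike.coe_injective hfun
  · have key : ∀ ε : ℝ, 0 < ε → ∃ A ∈ N, ‖A Ω‖ = 1 ∧ ‖A Ω - V Ω‖ < ε := by
      intro ε hε
      obtain ⟨y, hy, ⟨B, hB, rfl⟩⟩ := Metric.dense_iff.mp hcyc (V Ω) (min (ε / 2) (1 / 2))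
        (by positivity)
      rw [Metric.mem_ball, dist_eq_norm, lt_min_iff] at hy
      have habs : |‖B Ω‖ - 1| ≤ ‖B Ω - V Ω‖ := by
        have := abs_norm_sub_norm_le (B Ω) (V Ω)
        rwa [hVΩ] at this
      have hpos : 0 < ‖B Ω‖ := by
        have := (abs_le.mp habs).1
        linarith [hy.2]
      have hn : ‖((‖B Ω‖⁻¹ : ℝ) : ℂ) • B Ω‖ = 1 := by
        rw [norm_smul, Complex.norm_real, norm_inv, norm_norm, inv_mul_cancel₀ hpos.ne']
      refine ⟨((‖B Ω‖⁻¹ : ℝ) : ℂ) • B, N.smul_mem hB _, by simpa using hn, ?_⟩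
      have hd : ‖((‖B Ω‖⁻¹ : ℝ) : ℂ) • B Ω - B Ω‖ = |‖B Ω‖ - 1| := by
        have : ((‖B Ω‖⁻¹ : ℝ) : ℂ) • B Ω - B Ω = ((‖B Ω‖⁻¹ - 1 : ℝ) : ℂ) • B Ω := by
          push_cast
          rw [sub_smul, one_smul]
        rw [this, norm_smul, Complex.norm_real, Real.norm_eq_abs]
        nth_rewrite 2 [← abs_of_pos hpos]
        rw [← abs_mul, sub_mul, inv_mul_cancel₀ hpos.ne', one_mul, abs_sub_comm]
      have ht := norm_sub_le_norm_sub_add_norm_sub (((‖B Ω‖⁻¹ : ℝ) : ℂ) • B Ω) (B Ω) (V Ω)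
      rw [ContinuousLinearMap.smul_apply]
      linarith [hy.1]
    choose A hAN hA1 hAd using fun m : ℕ => key (1 / ((m : ℝ) + 1)) (by positivity)
    have hlim0 : Tendsto (fun m => ‖A m Ω - V Ω‖) atTop (𝓝 0) :=
      squeeze_zero (fun _ => norm_nonneg _) (fun m => (hAd m).le)
        tendsto_one_div_add_atTop_nhds_zero_nat
    have hlim : Tendsto (fun m => A m Ω) atTop (𝓝 (V Ω)) :=
      tendsto_iff_norm_sub_tendsto_zero.mpr hlim0
    refine ⟨A, hAN, hA1, ?_, (tendsto_const_nhds.inner hlim).norm⟩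
    intro ε hε
    obtain ⟨M, hM⟩ := eventually_atTop.mp (hlim0.eventually (gt_mem_nhds (half_pos hε)))
    refine ⟨M, fun m hm C hC hC1 => ?_⟩
    have hm' := hM m hm
    rw [← hVin Ω (C Ω), hVcomm' C hC]
    have hsplit : ⟪A m Ω, C (A m Ω)⟫ - ⟪V Ω, C (V Ω)⟫
        = ⟪A m Ω, C (A m Ω - V Ω)⟫ + ⟪A m Ω - V Ω, C (V Ω)⟫ := by
      rw [map_sub, inner_sub_right, inner_sub_left]
      ring
    have hCle : ∀ x, ‖C x‖ ≤ ‖x‖ := fun x => by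
      simpa using C.le_of_opNorm_le hC1 x
    have e1 : ‖⟪A m Ω, C (A m Ω - V Ω)⟫‖ ≤ ‖A m Ω - V Ω‖ := by
      refine (norm_inner_le_norm _ _).trans ?_
      rw [hA1, one_mul]
      exact hCle _
    have e2 : ‖⟪A m Ω - V Ω, C (V Ω)⟫‖ ≤ ‖A m Ω - V Ω‖ := by
      refine (norm_inner_le_norm _ _).trans ?_
      have := hCle (V Ω)
      rw [hVΩ] at this
      exact mul_le_of_le_one_right (norm_nonneg _) this
    rw [hsplit]
    refine (norm_add_le _ _).trans ?_
    linarith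
end

section
/- Assume hypotheses (C) and (E). Let A_1, …, A_K ∈ 𝐍 and B_1, …, B_L ∈ 𝐍 with ‖A_k Ω‖ = ‖B_l Ω‖ = 1 for all k, l, and let c_1, …, c_K, d_1, …, d_L ∈ ℂ. If ∑_{k=1}^K c_k ω_{A_k}(C) = 0 for every C ∈ 𝐍, then for every C ∈ 𝐍: ∑_{k=1}^K ∑_{l=1}^L c_k d_l ⟨A_k Ω, B_l Ω⟩ ⟨B_l Ω, C A_k Ω⟩ = 0. (This is the well-definedness of the bilinear product (ω_A × ω_B)(C) = ⟨A Ω, B Ω⟩⟨B Ω, C A Ω⟩ on the linear span of the states, turning that span into an algebra.) -/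
open scoped ComplexInnerProductSpace

/-- from the proof of Proposition 4.1: well-definedness of the product
`(ω_A × ω_B)(C) = ⟨AΩ, BΩ⟩⟨BΩ, C AΩ⟩` on the linear span of the states.  Under
hypotheses (C) and (E): if `∑_k c_k ω_{A_k}` vanishes on `𝐍`, then for every `C ∈ 𝐍`
the double sum `∑_k ∑_l c_k d_l ⟨A_k Ω, B_l Ω⟩⟨B_l Ω, C A_k Ω⟩` vanishes. -/
theorem stmt_10 {H : Type*} [NormedAddCommGroup H] [InnerProductSpace ℂ H] [CompleteSpace H]
    [TopologicalSpace.SeparableSpace H]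
    (N : ℕ → VonNeumannAlgebra H)
    (hmono : ∀ n, (N n : Set (H →L[ℂ] H)) ⊆ (N (n + 1) : Set (H →L[ℂ] H)))
    (Ω : H) (hΩ : ‖Ω‖ = 1)
    -- Hypothesis (C)
    (hC : ∀ n : ℕ, Dense
      (Submodule.span ℂ
        {x : H | ∃ X ∈ N (n + 1), (∀ Y ∈ N n, X * Y = Y * X) ∧ x = X Ω} : Set H))
    -- Hypothesis (E)
    (hE : ∀ n : ℕ, ∃ E : H →L[ℂ] H, E ∈ N (n + 1) ∧ E ≠ 0 ∧
      IsSelfAdjoint E ∧ IsIdempotentElem E ∧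
      ∀ C ∈ N n, E * C * E = ⟪Ω, C Ω⟫ • E)
    (K L : ℕ) (A : Fin K → (H →L[ℂ] H)) (B : Fin L → (H →L[ℂ] H))
    (hA : ∀ k, A k ∈ ⋃ n, (N n : Set (H →L[ℂ] H)))
    (hB : ∀ l, B l ∈ ⋃ n, (N n : Set (H →L[ℂ] H)))
    (hAnorm : ∀ k, ‖A k Ω‖ = 1) (hBnorm : ∀ l, ‖B l Ω‖ = 1)
    (c : Fin K → ℂ) (d : Fin L → ℂ)
    (hvanish : ∀ C ∈ ⋃ n, (N n : Set (H →L[ℂ] H)),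
      ∑ k, c k * ⟪A k Ω, C (A k Ω)⟫ = 0) :
    ∀ C ∈ ⋃ n, (N n : Set (H →L[ℂ] H)),
      ∑ k, ∑ l, c k * d l * ⟪A k Ω, B l Ω⟫ * ⟪B l Ω, C (A k Ω)⟫ = 0 := by
  intro C hCm
  have hm : Monotone (fun n => (N n : Set (H →L[ℂ] H))) := monotone_nat_of_le_succ hmono
  rw [Finset.sum_comm]
  refine Finset.sum_eq_zero fun l _ => ?_
  choose a ha using fun k => Set.mem_iUnion.1 (hA k)
  obtain ⟨b, hb⟩ := Set.mem_iUnion.1 (hB l)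
  obtain ⟨e, he⟩ := Set.mem_iUnion.1 hCm
  obtain ⟨n, hna, hnb, hne⟩ : ∃ n, (∀ k, a k ≤ n) ∧ b ≤ n ∧ e ≤ n :=
    ⟨(∑ k, a k) + b + e, fun k => by
      have := Finset.single_le_sum (f := a) (fun _ _ => Nat.zero_le _) (Finset.mem_univ k)
      omega, by omega, by omega⟩
  have hAn : ∀ k, A k ∈ N n := fun k => hm (hna k) (ha k)
  have hBn : B l ∈ N n := hm hnb hb
  have hCn : C ∈ N n := hm hne he
  have up : ∀ {T : H →L[ℂ] H}, T ∈ N n → T ∈ N (n + 1) := fun h => hmono n h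
  obtain ⟨E, hEm, hE0, -, hEi, hEc⟩ := hE n
  have key : ∀ X ∈ N (n + 1), ∑ k, c k • (star (A k) * X * A k) = 0 := by
    intro X hX
    have hd := hC (n + 1)
    refine ContinuousLinearMap.ext_on hd ?_
    rintro _ ⟨Z', hZ', hZc', rfl⟩
    refine hd.eq_zero_of_inner_right (𝕜 := ℂ) ?_
    intro u hu
    induction hu using Submodule.span_induction with
    | zero => simp
    | add x y _ _ hx hy => rw [inner_add_left, hx, hy, add_zero]
    | smul r x _ hx => rw [inner_smul_left, hx, mul_zero]
    | mem x hx =>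
      obtain ⟨Z, hZ, hZc, rfl⟩ := hx
      have h0 := hvanish (star Z * X * Z') (Set.mem_iUnion.2 ⟨n + 1 + 1,
        mul_mem (mul_mem (star_mem hZ) (hmono _ hX)) hZ'⟩)
      rw [← h0]
      simp only [ContinuousLinearMap.sum_apply, inner_sum, ContinuousLinearMap.smul_apply,
        inner_smul_right, mul_assoc, ContinuousLinearMap.mul_apply]
      refine Finset.sum_congr rfl fun k _ => ?_
      have h1 : A k (Z Ω) = Z (A k Ω) := (DFunLike.congr_fun (hZc _ (up (hAn k))) Ω).symm
      have h2 : A k (Z' Ω) = Z' (A k Ω) := (DFunLike.congr_fun (hZc' _ (up (hAn k))) Ω).symm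
      rw [ContinuousLinearMap.star_eq_adjoint, ContinuousLinearMap.star_eq_adjoint,
        ContinuousLinearMap.adjoint_inner_right, ContinuousLinearMap.adjoint_inner_right, h1, h2]
  have h := key (B l * E * (star (B l) * C))
    (mul_mem (mul_mem (up hBn) hEm) (mul_mem (star_mem (up hBn)) (up hCn)))
  have h3 : (∑ k, c k * d l * ⟪A k Ω, B l Ω⟫ * ⟪B l Ω, C (A k Ω)⟫) • E
      = d l • (E * (∑ k, c k • (star (A k) * (B l * E * (star (B l) * C)) * A k)) * E) := by
    rw [Finset.mul_sum, Finset.sum_mul, Finset.smul_sum, Finset.sum_smul]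
    refine Finset.sum_congr rfl fun k _ => ?_
    have e1 := hEc (star (A k) * B l) (mul_mem (star_mem (hAn k)) hBn)
    have e2 := hEc (star (B l) * C * A k) (mul_mem (mul_mem (star_mem hBn) hCn) (hAn k))
    simp only [ContinuousLinearMap.mul_apply, ContinuousLinearMap.star_eq_adjoint,
      ContinuousLinearMap.adjoint_inner_right] at e1 e2
    have e3 : E * (star (A k) * (B l * E * (star (B l) * C)) * A k) * E
        = (E * (star (A k) * B l) * E) * (E * (star (B l) * C * A k) * E) := by
      have : (E * (star (A k) * B l) * E) * (E * (star (B l) * C * A k) * E)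
        = (E * (star (A k) * B l)) * (E * E) * ((star (B l) * C * A k) * E) := by
          simp only [mul_assoc]
      rw [this, hEi.eq]
      simp only [mul_assoc]
    rw [mul_smul_comm, smul_mul_assoc, e3]
    simp only [ContinuousLinearMap.star_eq_adjoint]
    rw [e1, e2, smul_mul_smul_comm, hEi.eq, smul_smul, smul_smul]
    congr 1
    ring
  rw [h, mul_zero, zero_mul, smul_zero] at h3
  exact (smul_eq_zero.1 h3).resolve_right hE0
end

section
/- Let H be a complex Hilbert space, let N ⊆ B(H) be a subalgebra containing the identity operator, let Ω ∈ H be a unit vector, let A_1, …, A_M ∈ N satisfy ⟨A_k Ω, A_l Ω⟩ = δ_{kl}, and let r_1, …, r_M ∈ ℝ. If ∑_{m=1}^M r_m |⟨Ω, A Ω⟩|² |⟨A_m Ω, A Ω⟩|² = 0 for every A ∈ N, then r_m = 0 for all m = 1, …, M. (This is the key step showing that the GNS representation, induced by ω, of the *-algebra spanned by the states is faithful.) -/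
open scoped ComplexInnerProductSpace

/-- key step in Proposition 4.3(ii), faithfulness of the GNS
representation. If `A_1, …, A_M` in a unital subalgebra `N` have orthonormal vectors
`A_m Ω` and real numbers `r_m` satisfy
`∑_m r_m |⟨Ω, AΩ⟩|² |⟨A_m Ω, AΩ⟩|² = 0` for every `A ∈ N`, then all `r_m` vanish. -/
theorem stmt_13 {H : Type*} [NormedAddCommGroup H] [InnerProductSpace ℂ H] [CompleteSpace H]
    (N : Subalgebra ℂ (H →L[ℂ] H))
    (Ω : H) (hΩ : ‖Ω‖ = 1)
    (M : ℕ) (A : Fin M → (H →L[ℂ] H)) (hA : ∀ m, A m ∈ N)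
    (horth : ∀ k l, ⟪A k Ω, A l Ω⟫ = if k = l then 1 else 0)
    (r : Fin M → ℝ)
    (h : ∀ B ∈ N, ∑ m, r m * ‖⟪Ω, B Ω⟫‖ ^ 2 * ‖⟪A m Ω, B Ω⟫‖ ^ 2 = 0) :
    ∀ m, r m = 0 := by
  intro k
  have hΩ2 : ⟪Ω, Ω⟫ = 1 := by
    rw [inner_self_eq_norm_sq_to_K, hΩ]; simp
  by_cases ha : ⟪Ω, A k Ω⟫ = 0
  · have hc : ⟪A k Ω, Ω⟫ = 0 := inner_eq_zero_symm.mp ha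
    have h1 := h 1 N.one_mem
    have h2 := h (A k + 1) (N.add_mem (hA k) N.one_mem)
    simp only [ContinuousLinearMap.one_apply, ContinuousLinearMap.add_apply, inner_add_right,
      hΩ2, ha, horth, zero_add, norm_one, one_pow, mul_one] at h1 h2
    have key : ∀ m, r m * ‖(if m = k then (1 : ℂ) else 0) + ⟪A m Ω, Ω⟫‖ ^ 2
        = (if m = k then r m else 0) + r m * ‖⟪A m Ω, Ω⟫‖ ^ 2 := by
      intro m
      by_cases hm : m = k
      · subst hm; simp [hc]
      · simp [hm]
    rw [Finset.sum_congr rfl (fun m _ => key m), Finset.sum_add_distrib, h1] at h2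
    simpa using h2
  · have h1 := h (A k) (hA k)
    rw [Finset.sum_eq_single k] at h1
    · rw [horth, if_pos rfl] at h1
      simpa [ha] using h1
    · intro m _ hm
      simp [horth, hm]
    · simp
end

section
/- Let H be an infinite-dimensional separable complex Hilbert space, let V ∈ B(H) be an isometry (V* V = 1), and let E = V V* be its range projection. Then there exists a sequence of isometries V_m ∈ B(H), m ∈ ℕ, with V_m V_m* = E for every m, such that V_m* → E in the strong operator topology and V_m → E in the weak operator topology. -/
open scoped ComplexInnerProductSpace

open Filter Topology

theorem norm_of_star_mul {H : Type*} [NormedAddCommGroup H] [InnerProductSpace ℂ H]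
    [CompleteSpace H] (V : H →L[ℂ] H) (hV : star V * V = 1) (x : H) : ‖V x‖ = ‖x‖ := by
  have := (ContinuousLinearMap.norm_map_iff_adjoint_comp_self V).2 hV
  exact this x

theorem exists_unitary_ext {H : Type*} [NormedAddCommGroup H] [InnerProductSpace ℂ H]
    [CompleteSpace H] (V : H →L[ℂ] H) (hV : star V * V = 1) (F : Submodule ℂ H)
    [FiniteDimensional ℂ F] :
    ∃ W : H →L[ℂ] H, star W * W = 1 ∧ W * star W = 1 ∧ ∀ x ∈ F, W x = V x := by
  let G : Submodule ℂ H := F ⊔ F.map (V : H →ₗ[ℂ] H)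
  have hVG : ∀ x ∈ F, V x ∈ G := fun x hx =>
    (le_sup_right : _ ≤ G) (Submodule.mem_map_of_mem hx)
  have hFG : F ≤ G := le_sup_left
  haveI : FiniteDimensional ℂ G := inferInstance
  let S : Submodule ℂ G := F.comap G.subtype
  let L₀ : S →ₗ[ℂ] G :=
    LinearMap.codRestrict G ((V : H →ₗ[ℂ] H) ∘ₗ G.subtype ∘ₗ S.subtype) (fun s => hVG _ s.2)
  let L : S →ₗᵢ[ℂ] G := ⟨L₀, fun s => norm_of_star_mul V hV _⟩
  let A : G ≃ₗᵢ[ℂ] G := L.extend.toLinearIsometryEquiv rfl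
  let a : G →L[ℂ] H := G.subtypeL
  let P : H →L[ℂ] G := G.orthogonalProjection
  have hPa : ∀ g : G, P g = g := fun g => Submodule.orthogonalProjection_mem_subspace_eq_self g
  have hA : ∀ g h : G, ⟪(A g : H), (h : H)⟫ = ⟪(g : H), (A.symm h : H)⟫ := by
    intro g h
    have := A.inner_map_map g (A.symm h)
    rw [A.apply_symm_apply] at this
    exact this
  let W : H →L[ℂ] H := a ∘L (A : G →L[ℂ] G) ∘L P + (1 - a ∘L P)
  let W' : H →L[ℂ] H := a ∘L (A.symm : G →L[ℂ] G) ∘L P + (1 - a ∘L P)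
  have hW : ∀ x, W x = (A (P x) : H) + (x - (P x : H)) := fun x => rfl
  have hW' : ∀ x, W' x = (A.symm (P x) : H) + (x - (P x : H)) := fun x => rfl
  have hPP : ∀ x (g : G), ⟪x, (g : H)⟫ = ⟪(P x : H), (g : H)⟫ := by
    intro x g
    exact (Submodule.inner_orthogonalProjection_eq_of_mem_right g x).symm
  have hPP' : ∀ x (g : G), ⟪(g : H), x⟫ = ⟪(g : H), (P x : H)⟫ := by
    intro x g
    exact (Submodule.inner_orthogonalProjection_eq_of_mem_left g x).symm
  have hstar : star W = W' := by
    symm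
    rw [ContinuousLinearMap.star_eq_adjoint, ContinuousLinearMap.eq_adjoint_iff]
    intro x y
    rw [hW, hW']
    simp only [inner_add_left, inner_add_right, inner_sub_left, inner_sub_right]
    rw [hPP x (A (P y)), hPP x (P y), hPP' y (A.symm (P x)), hPP' y (P x)]
    have := hA (A.symm (P x)) (P y)
    have h2 := A.inner_map_map (A.symm (P x)) (P y)
    rw [A.apply_symm_apply] at h2
    have h3 : ⟪(P x : H), (A (P y) : H)⟫ = ⟪(A.symm (P x) : H), (P y : H)⟫ := h2
    rw [h3]
  refine ⟨W, ?_, ?_, ?_⟩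
  · rw [hstar]; ext x
    change W' (W x) = x
    rw [hW', hW]; simp [hPa]
  · rw [hstar]; ext x
    change W (W' x) = x
    rw [hW, hW']; simp [hPa]
  · intro x hx
    have h1 : P x = ⟨x, hFG hx⟩ := hPa ⟨x, hFG hx⟩
    have h2 : A ⟨x, hFG hx⟩ = L ⟨⟨x, hFG hx⟩, hx⟩ := L.extend_apply ⟨⟨x, hFG hx⟩, hx⟩
    rw [hW, h1, h2]
    change V x + (x - x) = V x
    simp

/-- Lemma 5.1(ii) for `B(H)`. For an isometry `V` on an
infinite-dimensional separable complex Hilbert space with range projection `E = V V*`,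
there are isometries `V_m` with the same range projection `E` such that
`V_m* → E` strongly and `V_m ⇀ E` weakly. -/
theorem stmt_15 {H : Type*} [NormedAddCommGroup H] [InnerProductSpace ℂ H] [CompleteSpace H]
    [TopologicalSpace.SeparableSpace H]
    (hinf : ¬ FiniteDimensional ℂ H)
    (V : H →L[ℂ] H) (hV : star V * V = 1) :
    ∃ Vm : ℕ → (H →L[ℂ] H),
      (∀ m, star (Vm m) * Vm m = 1) ∧
      (∀ m, Vm m * star (Vm m) = V * star V) ∧
      (∀ x : H, Tendsto (fun m => (star (Vm m)) x) atTop (𝓝 ((V * star V) x))) ∧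
      (∀ x y : H, Tendsto (fun m => ⟪y, (Vm m) x⟫) atTop (𝓝 ⟪y, (V * star V) x⟫)) := by
  let d := TopologicalSpace.denseSeq H
  let F : ℕ → Submodule ℂ H := fun m => Submodule.span ℂ (d '' (Set.Iio m))
  haveI : ∀ m, FiniteDimensional ℂ (F m) := fun m =>
    FiniteDimensional.span_of_finite ℂ ((Set.finite_Iio m).image d)
  choose W hW1 hW2 hW3 using fun m => exists_unitary_ext V hV (F m)
  have hlim : ∀ x, Tendsto (fun m => W m x) atTop (𝓝 (V x)) := by
    intro x
    rw [Metric.tendsto_atTop]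
    intro ε hε
    obtain ⟨n, hn⟩ := (TopologicalSpace.denseRange_denseSeq H).exists_dist_lt x
      (half_pos hε)
    refine ⟨n + 1, fun m hm => ?_⟩
    have h1 : W m (d n) = V (d n) := hW3 m _ (Submodule.subset_span ⟨n, by simp; omega, rfl⟩)
    have h2 : W m x - V x = W m (x - d n) - V (x - d n) := by
      rw [map_sub, map_sub, h1]; abel
    rw [dist_eq_norm] at hn ⊢
    rw [h2]
    have h3 := norm_sub_le (W m (x - d n)) (V (x - d n))
    rw [norm_of_star_mul _ (hW1 m), norm_of_star_mul _ hV] at h3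
    have h4 : ‖x - d n‖ < ε / 2 := hn
    linarith
  have hs : ∀ x : H, Tendsto (fun m => (star (V * star (W m))) x) atTop
      (𝓝 ((V * star V) x)) := by
    intro x
    have := hlim (star V x)
    simpa [star_mul] using this
  refine ⟨fun m => V * star (W m), fun m => ?_, fun m => ?_, hs, fun x y => ?_⟩
  · rw [star_mul, star_star, mul_assoc, ← mul_assoc (star V), hV, one_mul, hW2]
  · rw [star_mul, star_star, mul_assoc, ← mul_assoc (star (W m)), hW1, one_mul]
  · have h := (hs y).inner (tendsto_const_nhds (x := x)) (𝕜 := ℂ)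
    have e : ∀ T : H →L[ℂ] H, ⟪(star T) y, x⟫ = ⟪y, T x⟫ := fun T => by
      rw [ContinuousLinearMap.star_eq_adjoint, ContinuousLinearMap.adjoint_inner_left]
    simp only [e] at h
    rw [← e (V * star V), star_mul, star_star]
    exact h
end

section
/- Let H be a complex Hilbert space, let M ⊆ B(H) be a *-subalgebra, let Ω ∈ H, and let E ∈ B(H) be a nonzero orthogonal projection satisfying E C E = ⟨Ω, C Ω⟩ • E for all C ∈ M. Then for every Z ∈ M one has ‖E Z‖ = ‖Z* Ω‖. -/
open scoped ComplexInnerProductSpace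

/-- auxiliary identity in the proof of Proposition 2.2. If a nonzero
orthogonal projection `E` satisfies `E C E = ⟨Ω, CΩ⟩ • E` for all `C` in a *-subalgebra
`M ⊆ B(H)`, then `‖E Z‖ = ‖Z* Ω‖` for every `Z ∈ M`. -/
theorem stmt_17 {H : Type*} [NormedAddCommGroup H] [InnerProductSpace ℂ H] [CompleteSpace H]
    (M : StarSubalgebra ℂ (H →L[ℂ] H))
    (Ω : H)
    (E : H →L[ℂ] H) (hE0 : E ≠ 0) (hEsa : IsSelfAdjoint E) (hEidem : IsIdempotentElem E)
    (hE : ∀ C ∈ M, E * C * E = ⟪Ω, C Ω⟫ • E) :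
    ∀ Z ∈ M, ‖E * Z‖ = ‖(star Z) Ω‖ := by
  intro Z hZ
  have hn : ‖E‖ = 1 := by
    have h1 : ‖E‖ * ‖E‖ = ‖E‖ := by
      have h := CStarRing.norm_self_mul_star (x := E)
      rw [hEsa.star_eq, hEidem.eq] at h
      exact h.symm
    have h0 : ‖E‖ ≠ 0 := norm_ne_zero_iff.mpr hE0
    exact mul_left_cancel₀ h0 (by rw [h1, mul_one])
  have h2 : ‖E * Z‖ * ‖E * Z‖ = ‖(star Z) Ω‖ * ‖(star Z) Ω‖ := by
    have h := CStarRing.norm_self_mul_star (x := E * Z)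
    have e : E * Z * star (E * Z) = E * (Z * star Z) * E := by
      rw [star_mul, hEsa.star_eq]
      simp only [mul_assoc]
    have e2 : ⟪Ω, (Z * star Z) Ω⟫ = ⟪(star Z) Ω, (star Z) Ω⟫ := by
      rw [ContinuousLinearMap.star_eq_adjoint, ContinuousLinearMap.adjoint_inner_left]
      rfl
    rw [e, hE _ (mul_mem hZ (star_mem hZ)), norm_smul, hn, mul_one, e2,
      inner_self_eq_norm_sq_to_K, norm_pow, RCLike.norm_ofReal, abs_norm, sq] at h
    exact h.symm
  exact (mul_self_inj (norm_nonneg _) (norm_nonneg _)).mp h2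
end

section
/- Let H be a complex Hilbert space, let M ⊆ B(H) be a *-subalgebra, let Ω ∈ H be a unit vector, and let E ∈ B(H) be a nonzero orthogonal projection satisfying E C E = ⟨Ω, C Ω⟩ • E for all C ∈ M. Let A ∈ M with ⟨Ω, A A* Ω⟩ ≠ 0. Then F := ⟨Ω, A A* Ω⟩⁻¹ • A* E A is an orthogonal projection, and F C F = (⟨Ω, A C A* Ω⟩ / ⟨Ω, A A* Ω⟩) • F for every C ∈ M. -/
open scoped ComplexInnerProductSpace

/-- auxiliary claim in the proof of Proposition 2.4. If a nonzero
orthogonal projection `E` satisfies `E C E = ⟨Ω, CΩ⟩ • E` for all `C` in a *-subalgebra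
`M ⊆ B(H)`, and `A ∈ M` has `⟨Ω, A A* Ω⟩ ≠ 0`, then
`F = ⟨Ω, A A* Ω⟩⁻¹ • (A* E A)` is an orthogonal projection and
`F C F = (⟨Ω, A C A* Ω⟩ / ⟨Ω, A A* Ω⟩) • F` for every `C ∈ M`. -/
theorem stmt_18 {H : Type*} [NormedAddCommGroup H] [InnerProductSpace ℂ H] [CompleteSpace H]
    (M : StarSubalgebra ℂ (H →L[ℂ] H))
    (Ω : H) (hΩ : ‖Ω‖ = 1)
    (E : H →L[ℂ] H) (hE0 : E ≠ 0) (hEsa : IsSelfAdjoint E) (hEidem : IsIdempotentElem E)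
    (hE : ∀ C ∈ M, E * C * E = ⟪Ω, C Ω⟫ • E)
    (A : H →L[ℂ] H) (hA : A ∈ M)
    (hAΩ : ⟪Ω, (A * star A) Ω⟫ ≠ 0) :
    IsSelfAdjoint ((⟪Ω, (A * star A) Ω⟫)⁻¹ • (star A * E * A)) ∧
    IsIdempotentElem ((⟪Ω, (A * star A) Ω⟫)⁻¹ • (star A * E * A)) ∧
    ∀ C ∈ M,
      ((⟪Ω, (A * star A) Ω⟫)⁻¹ • (star A * E * A)) * C *
          ((⟪Ω, (A * star A) Ω⟫)⁻¹ • (star A * E * A)) =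
        (⟪Ω, (A * C * star A) Ω⟫ / ⟪Ω, (A * star A) Ω⟫) •
          ((⟪Ω, (A * star A) Ω⟫)⁻¹ • (star A * E * A)) := by
  have key : ∀ C ∈ M,
      ((⟪Ω, (A * star A) Ω⟫)⁻¹ • (star A * E * A)) * C *
          ((⟪Ω, (A * star A) Ω⟫)⁻¹ • (star A * E * A)) =
        (⟪Ω, (A * C * star A) Ω⟫ / ⟪Ω, (A * star A) Ω⟫) •
          ((⟪Ω, (A * star A) Ω⟫)⁻¹ • (star A * E * A)) := by
    intro C hC
    have h1 := hE (A * C * star A) (mul_mem (mul_mem hA hC) (star_mem hA))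
    have h2 : (star A * E * A) * C * (star A * E * A)
        = ⟪Ω, (A * C * star A) Ω⟫ • (star A * E * A) := by
      calc (star A * E * A) * C * (star A * E * A)
          = star A * (E * (A * C * star A) * E) * A := by simp only [mul_assoc]
        _ = _ := by rw [h1, mul_smul_comm, smul_mul_assoc]
    rw [smul_mul_assoc, smul_mul_assoc, mul_smul_comm, h2, smul_smul, smul_smul, smul_smul]
    congr 1
    rw [div_eq_mul_inv]
    ring
  refine ⟨?_, ?_, key⟩
  · have hc : star (⟪Ω, (A * star A) Ω⟫) = ⟪Ω, (A * star A) Ω⟫ := by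
      have h3 : ⟪Ω, (A * star A) Ω⟫ = ⟪star A Ω, star A Ω⟫ := by
        rw [ContinuousLinearMap.star_eq_adjoint, ContinuousLinearMap.adjoint_inner_left]
        rfl
      rw [h3]
      exact inner_conj_symm _ _
    have h4 : star (star A * E * A) = star A * E * A := by
      rw [star_mul, star_mul, star_star, hEsa.star_eq, mul_assoc]
    rw [IsSelfAdjoint, star_smul, star_inv₀, hc, h4]
  · have h := key 1 (one_mem M)
    rw [mul_one, mul_one, div_self hAΩ, one_smul] at h
    exact h
end
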